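/- arXiv:2004.10801 — 4 statements merged into one kernel-verified Lean document; each statement's English description precedes it below -/
import Mathlib

section
/- Let A be a nontrivial finite group and consider the wreath product A ≀ ℤ = (⊕_{i∈ℤ} A) ⋊ ℤ with symmetric generating set S = (A∖{e}) ∪ {t, t⁻¹}, where t generates ℤ. For s_k ∈ A∖{e} write s_{i,k} = t^{i} s_k t^{-i}. Then for all integers m ≥ 1 and l with 0 < |l| < m and all choices s_{k_j} ∈ A∖{e} (−m ≤ j ≤ m), the element g = s_{0,k_0} s_{1,k_1} ⋯ s_{m,k_m} s_{-1,k_{-1}} ⋯ s_{-m,k_{-m}} t^{l} satisfies κ(g) > 0. -/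
namespace MedScale

/-- Word length of `g` with respect to a generating set `S`: the least length of a
word in the elements of `S` representing `g`. -/
noncomputable def wlen {G : Type*} [Group G] (S : Set G) (g : G) : ℕ :=
  sInf {n : ℕ | ∃ l : List G, (∀ x ∈ l, x ∈ S) ∧ l.prod = g ∧ l.length = n}

/-- Sphere of radius `r` about the identity. -/
def sphere {G : Type*} [Group G] (S : Set G) (r : ℕ) : Set G := {g : G | wlen S g = r}

/-- Ball of radius `r` about the identity. -/
def ball {G : Type*} [Group G] (S : Set G) (r : ℕ) : Set G := {g : G | wlen S g ≤ r}

/-- Spherical comparison distance `𝒮_r(g) = (1/|S_r|) ∑_{w ∈ S_r} |w⁻¹ g w|`. -/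
noncomputable def sphereDist {G : Type*} [Group G] (S : Set G) (r : ℕ) (g : G) : ℝ :=
  (1 / (Nat.card (sphere S r) : ℝ)) * ∑ᶠ w ∈ sphere S r, (wlen S (w⁻¹ * g * w) : ℝ)

/-- Spherical comparison curvature `κ_r^𝒮(g) = (|g| − 𝒮_r(g))/|g|`. -/
noncomputable def sphereCurv {G : Type*} [Group G] (S : Set G) (r : ℕ) (g : G) : ℝ :=
  ((wlen S g : ℝ) - sphereDist S r g) / (wlen S g : ℝ)

/-- Ball comparison distance `ℬ_r(g) = (1/|B_r|) ∑_{w ∈ B_r} |w⁻¹ g w|`. -/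
noncomputable def ballDist {G : Type*} [Group G] (S : Set G) (r : ℕ) (g : G) : ℝ :=
  (1 / (Nat.card (ball S r) : ℝ)) * ∑ᶠ w ∈ ball S r, (wlen S (w⁻¹ * g * w) : ℝ)

/-- Ball comparison curvature `κ_r^ℬ(g) = (|g| − ℬ_r(g))/|g|`. -/
noncomputable def ballCurv {G : Type*} [Group G] (S : Set G) (r : ℕ) (g : G) : ℝ :=
  ((wlen S g : ℝ) - ballDist S r g) / (wlen S g : ℝ)

/-- `GenCon(g) = (1/|S|) ∑_{s ∈ S} |s⁻¹ g s|`. -/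
noncomputable def genCon {G : Type*} [Group G] (S : Set G) (g : G) : ℝ :=
  (1 / (Nat.card S : ℝ)) * ∑ᶠ s ∈ S, (wlen S (s⁻¹ * g * s) : ℝ)

/-- Comparison curvature `κ(g) = (|g| − GenCon(g))/|g|`. -/
noncomputable def curv {G : Type*} [Group G] (S : Set G) (g : G) : ℝ :=
  ((wlen S g : ℝ) - genCon S g) / (wlen S g : ℝ)

end MedScale


namespace Wreath

variable (A : Type*) [Group A]

/-- The restricted product `⊕_{i ∈ ℤ} A`: functions `ℤ → A` with finite support. -/
def Restricted : Subgroup (ℤ → A) where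
  carrier := {f | (Function.mulSupport f).Finite}
  one_mem' := by
    have : Function.mulSupport (1 : ℤ → A) = ∅ := Function.mulSupport_one
    simp [Set.mem_setOf_eq, this]
  mul_mem' := by
    intro f g hf hg
    exact (hf.union hg).subset (Function.mulSupport_mul f g)
  inv_mem' := by
    intro f hf
    simpa [Set.mem_setOf_eq, Function.mulSupport_inv] using hf

lemma shift_mem (k : ℤ) (f : ℤ → A) (hf : f ∈ Restricted A) :
    (fun j => f (j + k)) ∈ Restricted A := by
  have h : Function.mulSupport (fun j => f (j + k)) = (fun j : ℤ => j + k) ⁻¹' (Function.mulSupport f) := rfl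
  show (Function.mulSupport (fun j => f (j + k))).Finite
  rw [h]
  exact Set.Finite.preimage (Set.injOn_of_injective (add_left_injective k)) hf

/-- The shift by `k` as an automorphism of the restricted product. -/
def shiftRes (k : ℤ) : Restricted A ≃* Restricted A where
  toFun f := ⟨fun j => f.1 (j + k), shift_mem A k f.1 f.2⟩
  invFun f := ⟨fun j => f.1 (j + -k), shift_mem A (-k) f.1 f.2⟩
  left_inv f := by ext j; simp
  right_inv f := by ext j; simp
  map_mul' f g := rfl

/-- The shift action of `ℤ` on the restricted product. -/
def shiftHom : Multiplicative ℤ →* MulAut (Restricted A) where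
  toFun k := shiftRes A k.toAdd
  map_one' := by
    ext f j
    show f.1 (j + (0 : ℤ)) = f.1 j
    simp
  map_mul' x y := by
    ext f j
    show f.1 (j + (x.toAdd + y.toAdd)) = f.1 ((j + x.toAdd) + y.toAdd)
    rw [add_assoc]

/-- The wreath product `A ≀ ℤ = (⊕_{i ∈ ℤ} A) ⋊ ℤ`. -/
def W : Type _ := SemidirectProduct (Restricted A) (Multiplicative ℤ) (shiftHom A)

instance : Group (W A) := SemidirectProduct.instGroup

/-- The element of the restricted product equal to `x` at index `0` and trivial elsewhere. -/
def lampAt (x : A) : Restricted A :=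
  ⟨fun j => if j = 0 then x else 1, by
    show (Function.mulSupport _).Finite
    apply Set.Finite.subset (Set.finite_singleton (0 : ℤ))
    intro j hj
    rw [Function.mem_mulSupport] at hj
    by_contra hj0
    simp only [Set.mem_singleton_iff] at hj0
    exact hj (if_neg hj0)⟩

/-- The generator `t` of the `ℤ` factor of `A ≀ ℤ`. -/
def tW : W A := ⟨1, Multiplicative.ofAdd 1⟩

/-- The generator of `A ≀ ℤ` given by a nonidentity element `x ∈ A` at index `0`. -/
def genA (x : A) : W A := ⟨lampAt A x, 1⟩

/-- The symmetric generating set `S = (A ∖ {e}) ∪ {t, t⁻¹}` of `A ≀ ℤ`. -/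
def SW : Set (W A) := {w | ∃ x : A, x ≠ 1 ∧ w = genA A x} ∪ {tW A, (tW A)⁻¹}

/-- `s_{i,k} = tⁱ s_k t⁻ⁱ`, placing `s_k ∈ A ∖ {e}` at index ... -/
def sik (i : ℤ) (x : A) : W A := tW A ^ i * genA A x * tW A ^ (-i)

end Wreath

/-!
An element `w` of `A ≀ ℤ` is a lamp configuration together with a cursor, and right multiplication
by a generator moves the cursor one step or changes the lamp under it. Hence `|w|` is the number of
lit lamps plus the length of a shortest walk from `0` to the cursor that visits all of them. If
`[-L, R]` is the hull of `0`, the cursor `p` and the lit sites, that walk has length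
`2 * (R + L) - |p|`.

Conjugation by `t` translates the lamps and fixes the cursor, so `R + L` is unchanged as long as
lamps are lit strictly beyond both `0` and the cursor on either side. Conjugation by a lamp
generator only affects the sites `0` and `p`; if both are lit and distinct it lights no new lamp,
and conjugation by the lamp at `0` extinguishes it.
-/

namespace MedScale

variable {G : Type*} [Group G] {S : Set G}

lemma le_length_of_mul_le_add_one {f : G → ℕ} (one : f 1 = 0)
    (step : ∀ g, ∀ s ∈ S, f (g * s) ≤ f g + 1) (u : List G) (hu : ∀ x ∈ u, x ∈ S) :
    f u.prod ≤ u.length := by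
  induction u using List.reverseRecOn with
  | nil => simp [one]
  | append_singleton u s ih =>
    simp only [List.forall_mem_append, List.forall_mem_singleton] at hu
    simpa using (step u.prod s hu.2).trans (Nat.add_le_add_right (ih hu.1) 1)

lemma exists_word_of_descent {f : G → ℕ} (descent : ∀ g ≠ 1, ∃ s ∈ S, f (g * s⁻¹) < f g) (g : G) :
    ∃ u : List G, (∀ x ∈ u, x ∈ S) ∧ u.prod = g ∧ u.length ≤ f g := by
  induction hn : f g using Nat.strong_induction_on generalizing g with
  | _ n ih =>
    subst hn
    by_cases hg : g = 1
    · exact ⟨[], by simp, by simp [hg], by simp⟩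
    · obtain ⟨s, hs, hlt⟩ := descent g hg
      obtain ⟨u, hu, hprod, hlen⟩ := ih _ hlt (g * s⁻¹) rfl
      refine ⟨u ++ [s], ?_, by simp [hprod], by simpa using hlen.trans_lt hlt⟩
      simpa only [List.forall_mem_append, List.forall_mem_singleton] using ⟨hu, hs⟩

theorem wlen_eq_of_descent {f : G → ℕ} (one : f 1 = 0)
    (step : ∀ g, ∀ s ∈ S, f (g * s) ≤ f g + 1)
    (descent : ∀ g ≠ 1, ∃ s ∈ S, f (g * s⁻¹) < f g) (g : G) : wlen S g = f g := by
  obtain ⟨u, hu, rfl, hlen⟩ := exists_word_of_descent descent g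
  have hlower := le_length_of_mul_le_add_one one step
  refine IsLeast.csInf_eq ⟨⟨u, hu, rfl, hlen.antisymm (hlower u hu)⟩, ?_⟩
  rintro _ ⟨v, hv, hprod, rfl⟩
  exact hprod ▸ hlower v hv

theorem curv_pos_of_wlen_conj_le (hS : S.Finite) {g : G}
    (hle : ∀ s ∈ S, wlen S (s⁻¹ * g * s) ≤ wlen S g)
    (hlt : ∃ s ∈ S, wlen S (s⁻¹ * g * s) < wlen S g) : 0 < curv S g := by
  obtain ⟨s₀, hs₀, hlt₀⟩ := hlt
  have hsum : ∑ s ∈ hS.toFinset, (wlen S (s⁻¹ * g * s) : ℝ) < hS.toFinset.card * wlen S g := by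
    rw [← nsmul_eq_mul, ← Finset.sum_const]
    refine Finset.sum_lt_sum (fun s hs => ?_) ⟨s₀, hS.mem_toFinset.2 hs₀, by exact_mod_cast hlt₀⟩
    exact_mod_cast hle s (hS.mem_toFinset.1 hs)
  have hcard : 0 < (hS.toFinset.card : ℝ) :=
    Nat.cast_pos.2 (Finset.card_pos.2 ⟨s₀, hS.mem_toFinset.2 hs₀⟩)
  refine div_pos (sub_pos.2 ?_) (Nat.cast_pos.2 (Nat.zero_lt_of_lt hlt₀))
  rwa [genCon, finsum_mem_eq_finite_toFinset_sum _ hS, Nat.card_coe_set_eq,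
    Set.ncard_eq_toFinset_card S hS, one_div, inv_mul_lt_iff₀ hcard]

end MedScale

namespace Wreath

variable {A : Type*} [Group A]

/-- The state of the lamp of `w` at site `j`. As `shiftRes k f = f (· + k)`, conjugation
by `tⁱ` carries index `0` to index `-i`; the sign here puts the lamp of `sik A i x` at site `i`. -/
def lamp (w : W A) (j : ℤ) : A := (SemidirectProduct.left w).1 (-j)

/-- The position of the cursor of `w`: its image in the quotient `ℤ` of `A ≀ ℤ`. -/
def pos (w : W A) : ℤ := (SemidirectProduct.right w).toAdd

lemma ext_lamp_pos {v w : W A} (hlamp : ∀ j, lamp v j = lamp w j) (hpos : pos v = pos w) :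
    v = w :=
  SemidirectProduct.ext
    (Subtype.ext (funext fun j => by simpa only [lamp, neg_neg] using hlamp (-j))) hpos

lemma lamp_mul (v w : W A) (j : ℤ) : lamp (v * w) j = lamp v j * lamp w (j - pos v) := by
  rw [lamp, lamp, lamp, neg_sub, ← neg_add_eq_sub]
  rfl

lemma pos_mul (v w : W A) : pos (v * w) = pos v + pos w := rfl

lemma lamp_one (j : ℤ) : lamp (1 : W A) j = 1 := rfl

lemma pos_one : pos (1 : W A) = 0 := rfl

lemma pos_inv (w : W A) : pos w⁻¹ = -pos w := rfl

lemma lamp_inv (w : W A) (j : ℤ) : lamp w⁻¹ j = (lamp w (j + pos w))⁻¹ := by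
  rw [eq_inv_iff_mul_eq_one]
  have h := lamp_mul w⁻¹ w j
  rwa [inv_mul_cancel, lamp_one, pos_inv, sub_neg_eq_add, eq_comm] at h

lemma tW_zpow (k : ℤ) : tW A ^ k = (⟨1, Multiplicative.ofAdd k⟩ : W A) := by
  have h := map_zpow (SemidirectProduct.inr (φ := shiftHom A)) (Multiplicative.ofAdd 1) k
  rw [← ofAdd_zsmul, smul_eq_mul, mul_one] at h
  exact h.symm

lemma lamp_tW_zpow (k j : ℤ) : lamp (tW A ^ k) j = 1 := by
  rw [tW_zpow]
  rfl

lemma pos_tW_zpow (k : ℤ) : pos (tW A ^ k) = k := by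
  rw [tW_zpow]
  rfl

lemma lamp_genA (x : A) (j : ℤ) : lamp (genA A x) j = if j = 0 then x else 1 := by
  simp [lamp, genA, lampAt]

lemma pos_genA (x : A) : pos (genA A x) = 0 := rfl

lemma lamp_mul_tW_zpow (w : W A) (k j : ℤ) : lamp (w * tW A ^ k) j = lamp w j := by
  rw [lamp_mul, lamp_tW_zpow, mul_one]

lemma lamp_mul_genA (w : W A) (x : A) (j : ℤ) :
    lamp (w * genA A x) j = lamp w j * if j = pos w then x else 1 := by
  simp only [lamp_mul, lamp_genA, sub_eq_zero]

lemma lamp_mul_genA_inv (w : W A) (x : A) (j : ℤ) :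
    lamp (w * (genA A x)⁻¹) j = lamp w j * if j = pos w then x⁻¹ else 1 := by
  simp only [lamp_mul, lamp_inv, lamp_genA, pos_genA, add_zero, sub_eq_zero, apply_ite Inv.inv,
    inv_one]

lemma lamp_conj_tW_zpow (w : W A) (k j : ℤ) :
    lamp ((tW A ^ k)⁻¹ * w * tW A ^ k) j = lamp w (j + k) := by
  rw [lamp_mul_tW_zpow, lamp_mul, lamp_inv, lamp_tW_zpow, inv_one, one_mul, pos_inv, pos_tW_zpow,
    sub_neg_eq_add]

lemma lamp_conj_genA (w : W A) (x : A) (j : ℤ) :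
    lamp ((genA A x)⁻¹ * w * genA A x) j =
      (if j = 0 then x⁻¹ else 1) * lamp w j * if j = pos w then x else 1 := by
  rw [lamp_mul_genA, lamp_mul, lamp_inv, pos_mul, pos_inv, pos_genA, lamp_genA]
  simp only [add_zero, neg_zero, sub_zero, zero_add, apply_ite Inv.inv, inv_one]

lemma pos_conj (v w : W A) : pos (v⁻¹ * w * v) = pos w := by
  rw [pos_mul, pos_mul, pos_inv]
  ring

lemma lamp_sik (i : ℤ) (x : A) (j : ℤ) : lamp (sik A i x) j = if j = i then x else 1 := by
  rw [sik, lamp_mul_tW_zpow, lamp_mul_genA, lamp_tW_zpow, pos_tW_zpow, one_mul]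

lemma pos_sik (i : ℤ) (x : A) : pos (sik A i x) = 0 := by
  rw [sik, pos_mul, pos_mul, pos_tW_zpow, pos_tW_zpow, pos_genA]
  ring

lemma pos_prod_sik (c : ℤ → A) (u : List ℤ) : pos (u.map fun i => sik A i (c i)).prod = 0 := by
  induction u with
  | nil => exact pos_one
  | cons i u ih => rw [List.map_cons, List.prod_cons, pos_mul, pos_sik, ih, add_zero]

lemma lamp_prod_sik (c : ℤ → A) {u : List ℤ} (hu : u.Nodup) (j : ℤ) :
    lamp (u.map fun i => sik A i (c i)).prod j = if j ∈ u then c j else 1 := by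
  induction u with
  | nil => exact lamp_one j
  | cons i u ih =>
    obtain ⟨hi, hu⟩ := List.nodup_cons.1 hu
    rw [List.map_cons, List.prod_cons, lamp_mul, lamp_sik, pos_sik, sub_zero, ih hu]
    by_cases hj : j = i
    · subst hj
      simp [hi]
    · simp [hj]

lemma finite_mulSupport_lamp (w : W A) : (Function.mulSupport (lamp w)).Finite :=
  (SemidirectProduct.left w).2.preimage neg_injective.injOn

/-- The finite set of sites at which the lamp of `w` is lit, that is, nontrivial. -/
noncomputable def lit (w : W A) : Finset ℤ := (finite_mulSupport_lamp w).toFinset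

lemma mem_lit {w : W A} {j : ℤ} : j ∈ lit w ↔ lamp w j ≠ 1 := by
  rw [lit, Set.Finite.mem_toFinset, Function.mem_mulSupport]

lemma eq_one_of_lit_eq_empty {w : W A} (hlit : lit w = ∅) (hpos : pos w = 0) : w = 1 :=
  ext_lamp_pos (fun j => by_contra fun hj => by simpa [hlit] using mem_lit.2 hj) hpos

lemma lit_mul_tW_zpow (w : W A) (k : ℤ) : lit (w * tW A ^ k) = lit w := by
  ext j
  rw [mem_lit, mem_lit, lamp_mul_tW_zpow]

lemma lit_mul_genA_subset (w : W A) (x : A) : lit (w * genA A x) ⊆ insert (pos w) (lit w) := by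
  intro j hj
  by_cases hjp : j = pos w
  · exact Finset.mem_insert.2 (Or.inl hjp)
  · rw [mem_lit, lamp_mul_genA, if_neg hjp, mul_one] at hj
    exact Finset.mem_insert_of_mem (mem_lit.2 hj)

lemma lit_mul_genA_lamp_inv (w : W A) :
    lit (w * (genA A (lamp w (pos w)))⁻¹) = (lit w).erase (pos w) := by
  ext j
  rw [Finset.mem_erase, mem_lit, mem_lit, lamp_mul_genA_inv]
  by_cases hj : j = pos w <;> simp [hj]

lemma mem_lit_conj_tW_zpow {w : W A} {k j : ℤ} :
    j ∈ lit ((tW A ^ k)⁻¹ * w * tW A ^ k) ↔ j + k ∈ lit w := by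
  rw [mem_lit, mem_lit, lamp_conj_tW_zpow]

lemma card_lit_conj_tW_zpow (w : W A) (k : ℤ) :
    (lit ((tW A ^ k)⁻¹ * w * tW A ^ k)).card = (lit w).card := by
  refine Finset.card_bijective (· + k) (AddGroup.addRight_bijective k) fun j => ?_
  exact mem_lit_conj_tW_zpow

lemma lit_conj_genA_subset {w : W A} (hzero : 0 ∈ lit w) (hpos : pos w ∈ lit w) (x : A) :
    lit ((genA A x)⁻¹ * w * genA A x) ⊆ lit w := by
  intro j hj
  by_cases hj₀ : j = 0
  · exact hj₀ ▸ hzero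
  by_cases hjp : j = pos w
  · exact hjp ▸ hpos
  rwa [mem_lit, lamp_conj_genA, if_neg hj₀, if_neg hjp, one_mul, mul_one, ← mem_lit] at hj

lemma zero_notMem_lit_conj_genA_lamp {w : W A} (hpos : pos w ≠ 0) :
    0 ∉ lit ((genA A (lamp w 0))⁻¹ * w * genA A (lamp w 0)) := by
  rw [mem_lit, lamp_conj_genA, if_pos rfl, if_neg hpos.symm]
  simp

/-- The distance from `0` to the farthest nonnegative lit site, and `0` if there is none. -/
noncomputable def rightReach (w : W A) : ℕ := (lit w).sup Int.toNat

/-- The distance from `0` to the farthest nonpositive lit site, and `0` if there is none. -/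
noncomputable def leftReach (w : W A) : ℕ := (lit w).sup fun j => (-j).toNat

lemma rightReach_le_iff {w : W A} {n : ℕ} : rightReach w ≤ n ↔ ∀ j ∈ lit w, j ≤ n := by
  simp only [rightReach, Finset.sup_le_iff, Int.toNat_le]

lemma leftReach_le_iff {w : W A} {n : ℕ} : leftReach w ≤ n ↔ ∀ j ∈ lit w, -j ≤ n := by
  simp only [leftReach, Finset.sup_le_iff, Int.toNat_le]

lemma le_rightReach {w : W A} {j : ℤ} (hj : j ∈ lit w) : j ≤ rightReach w :=
  rightReach_le_iff.1 le_rfl j hj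

lemma neg_le_leftReach {w : W A} {j : ℤ} (hj : j ∈ lit w) : -j ≤ leftReach w :=
  leftReach_le_iff.1 le_rfl j hj

lemma rightReach_mono {v w : W A} (h : lit v ⊆ lit w) : rightReach v ≤ rightReach w :=
  Finset.sup_mono h

lemma leftReach_mono {v w : W A} (h : lit v ⊆ lit w) : leftReach v ≤ leftReach w :=
  Finset.sup_mono h

/-- The number of generators spent when the cursor walks from `0` to `pos w` along a shortest path
through all lit sites of `w`, setting each lamp on the way. The subtraction does not truncate. -/
noncomputable def tourLength (w : W A) : ℕ :=
  (lit w).card + 2 * (max (rightReach w) (pos w).toNat + max (leftReach w) (-pos w).toNat) -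
    (pos w).natAbs

lemma tourLength_one : tourLength (1 : W A) = 0 := by
  have hlit : lit (1 : W A) = ∅ := Finset.eq_empty_of_forall_notMem fun j hj =>
    mem_lit.1 hj (lamp_one j)
  simp [tourLength, rightReach, leftReach, hlit, pos_one]

lemma tourLength_le_of_lit_subset {v w : W A} (hpos : pos v = pos w) (h : lit v ⊆ lit w) :
    tourLength v ≤ tourLength w := by
  have := Finset.card_le_card h
  have := rightReach_mono h
  have := leftReach_mono h
  rw [tourLength, tourLength, hpos]
  omega

lemma tourLength_lt_of_lit_ssubset {v w : W A} (hpos : pos v = pos w) (h : lit v ⊂ lit w) :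
    tourLength v < tourLength w := by
  have := Finset.card_lt_card h
  have := rightReach_mono h.subset
  have := leftReach_mono h.subset
  rw [tourLength, tourLength, hpos]
  omega

lemma tourLength_mul_tW_zpow (w : W A) (k : ℤ) :
    tourLength (w * tW A ^ k) =
      (lit w).card + 2 * (max (rightReach w) (pos w + k).toNat +
        max (leftReach w) (-(pos w + k)).toNat) - (pos w + k).natAbs := by
  rw [tourLength, rightReach, leftReach, lit_mul_tW_zpow, pos_mul, pos_tW_zpow]
  rfl

lemma tourLength_mul_tW_zpow_le (w : W A) (k : ℤ) :
    tourLength (w * tW A ^ k) ≤ tourLength w + k.natAbs := by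
  rw [tourLength_mul_tW_zpow, tourLength]
  omega

lemma tourLength_mul_genA_le (w : W A) (x : A) :
    tourLength (w * genA A x) ≤ tourLength w + 1 := by
  have hsub := lit_mul_genA_subset w x
  have hcard : (lit (w * genA A x)).card ≤ (lit w).card + 1 :=
    (Finset.card_le_card hsub).trans (Finset.card_insert_le _ _)
  have hright : rightReach (w * genA A x) ≤ max (pos w).toNat (rightReach w) :=
    (Finset.sup_mono hsub).trans_eq (Finset.sup_insert ..)
  have hleft : leftReach (w * genA A x) ≤ max (-pos w).toNat (leftReach w) :=
    (Finset.sup_mono hsub).trans_eq (Finset.sup_insert ..)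
  rw [tourLength, tourLength, pos_mul, pos_genA, add_zero]
  omega

lemma forall_mem_SW {P : W A → Prop} :
    (∀ s ∈ SW A, P s) ↔ (∀ x ≠ 1, P (genA A x)) ∧ P (tW A ^ (1 : ℤ)) ∧ P (tW A ^ (-1 : ℤ)) := by
  rw [zpow_one, zpow_neg_one]
  constructor
  · exact fun h => ⟨fun x hx => h _ (Or.inl ⟨x, hx, rfl⟩), h _ (Or.inr (Or.inl rfl)),
      h _ (Or.inr (Or.inr rfl))⟩
  · rintro ⟨hgen, ht, htinv⟩ s (⟨x, hx, rfl⟩ | rfl | rfl)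
    exacts [hgen x hx, ht, htinv]

lemma genA_mem_SW {x : A} (hx : x ≠ 1) : genA A x ∈ SW A := Or.inl ⟨x, hx, rfl⟩

lemma tourLength_mul_le_add_one (w : W A) : ∀ s ∈ SW A, tourLength (w * s) ≤ tourLength w + 1 :=
  forall_mem_SW.2 ⟨fun x _ => tourLength_mul_genA_le w x, tourLength_mul_tW_zpow_le w 1,
    tourLength_mul_tW_zpow_le w (-1)⟩

lemma tourLength_extinguish_lt {w : W A} (h : pos w ∈ lit w) :
    tourLength (w * (genA A (lamp w (pos w)))⁻¹) < tourLength w := by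
  refine tourLength_lt_of_lit_ssubset ?_ ?_
  · rw [pos_mul, pos_inv, pos_genA, neg_zero, add_zero]
  · rw [lit_mul_genA_lamp_inv]
    exact Finset.erase_ssubset h

/- Undoing a shortest tour: with lit lamps remaining on the far side of the cursor from `0` one
steps away from `0`, and otherwise back towards `0`. -/
lemma exists_tourLength_mul_tW_zpow_lt {w : W A} (h : pos w ∉ lit w) (hw : w ≠ 1) :
    tourLength (w * tW A ^ (1 : ℤ)) < tourLength w ∨
      tourLength (w * tW A ^ (-1 : ℤ)) < tourLength w := by
  rw [tourLength_mul_tW_zpow, tourLength_mul_tW_zpow, tourLength]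
  have hne {j : ℤ} (hj : j ∈ lit w) : j ≠ pos w := fun hjp => h (hjp ▸ hj)
  by_cases hbeyond : ∃ j ∈ lit w, (0 ≤ pos w ∧ pos w < j) ∨ (pos w ≤ 0 ∧ j < pos w)
  · obtain ⟨j, hj, hj'⟩ := hbeyond
    have := le_rightReach hj
    have := neg_le_leftReach hj
    omega
  push Not at hbeyond
  rcases lt_trichotomy (pos w) 0 with hneg | hzero | hpos
  · have : leftReach w ≤ (-pos w - 1).toNat := leftReach_le_iff.2 fun j hj => by
      have := hbeyond j hj
      have := hne hj
      omega
    omega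
  · refine absurd (eq_one_of_lit_eq_empty ?_ hzero) hw
    refine Finset.eq_empty_of_forall_notMem fun j hj => ?_
    have := hbeyond j hj
    have := hne hj
    omega
  · have : rightReach w ≤ (pos w - 1).toNat := rightReach_le_iff.2 fun j hj => by
      have := hbeyond j hj
      have := hne hj
      omega
    omega

lemma exists_tourLength_mul_inv_lt {w : W A} (hw : w ≠ 1) :
    ∃ s ∈ SW A, tourLength (w * s⁻¹) < tourLength w := by
  by_cases h : pos w ∈ lit w
  · exact ⟨_, genA_mem_SW (mem_lit.1 h), tourLength_extinguish_lt h⟩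
  · rcases exists_tourLength_mul_tW_zpow_lt h hw with hlt | hlt
    · exact ⟨(tW A)⁻¹, Or.inr (Or.inr rfl), by rwa [inv_inv, ← zpow_one (tW A)]⟩
    · exact ⟨tW A, Or.inr (Or.inl rfl), by rwa [← zpow_neg_one]⟩

theorem wlen_eq_tourLength (w : W A) : MedScale.wlen (SW A) w = tourLength w :=
  MedScale.wlen_eq_of_descent tourLength_one tourLength_mul_le_add_one
    (fun _ => exists_tourLength_mul_inv_lt) w

lemma tourLength_conj_tW_zpow_le {w : W A} {i j k : ℤ} (hi : i ∈ lit w)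
    (hik : i ≤ min 0 (pos w) + k) (hj : j ∈ lit w) (hjk : max 0 (pos w) + k ≤ j) :
    tourLength ((tW A ^ k)⁻¹ * w * tW A ^ k) ≤ tourLength w := by
  set v := (tW A ^ k)⁻¹ * w * tW A ^ k
  have hiL := neg_le_leftReach hi
  have hjR := le_rightReach hj
  have hright : rightReach v ≤ (rightReach w - k).toNat := rightReach_le_iff.2 fun n hn => by
    have := le_rightReach (mem_lit_conj_tW_zpow.1 hn)
    omega
  have hleft : leftReach v ≤ (leftReach w + k).toNat := leftReach_le_iff.2 fun n hn => by
    have := neg_le_leftReach (mem_lit_conj_tW_zpow.1 hn)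
    omega
  rw [tourLength, tourLength, card_lit_conj_tW_zpow, pos_conj]
  omega

lemma finite_SW [Finite A] : (SW A).Finite :=
  ((Set.finite_range (genA A)).subset (by rintro _ ⟨x, _, rfl⟩; exact ⟨x, rfl⟩)).union
    (Set.toFinite _)

theorem wreath_backtrack_pos_curv_general [Finite A] {g : W A} (hpos : pos g ≠ 0)
    (hlit_zero : lamp g 0 ≠ 1) (hlit_pos : lamp g (pos g) ≠ 1)
    (hleft : ∃ i < min 0 (pos g), lamp g i ≠ 1) (hright : ∃ j > max 0 (pos g), lamp g j ≠ 1) :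
    0 < MedScale.curv (SW A) g := by
  obtain ⟨i, hi, hlit_i⟩ := hleft
  obtain ⟨j, hj, hlit_j⟩ := hright
  rw [← mem_lit] at hlit_pos hlit_i hlit_j
  have hsub := lit_conj_genA_subset (mem_lit.2 hlit_zero) hlit_pos
  apply MedScale.curv_pos_of_wlen_conj_le finite_SW <;> simp only [wlen_eq_tourLength]
  · exact forall_mem_SW.2 ⟨fun x _ => tourLength_le_of_lit_subset (pos_conj _ _) (hsub x),
      tourLength_conj_tW_zpow_le hlit_i (by omega) hlit_j (by omega),
      tourLength_conj_tW_zpow_le hlit_i (by omega) hlit_j (by omega)⟩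
  · refine ⟨genA A (lamp g 0), genA_mem_SW hlit_zero, ?_⟩
    refine tourLength_lt_of_lit_ssubset (pos_conj _ _) ((hsub _).ssubset_of_mem_notMem
      (mem_lit.2 hlit_zero) (zero_notMem_lit_conj_genA_lamp hpos))

/-- The sites `0, 1, …, m, -1, …, -m`, in the order in which the backtracking word lights them. -/
def backtrackSites (m : ℕ) : List ℤ :=
  (List.range (m + 1)).map (fun j : ℕ => (j : ℤ)) ++ (List.range m).map fun j : ℕ => -(j + 1 : ℤ)

lemma mem_backtrackSites {m : ℕ} {j : ℤ} : j ∈ backtrackSites m ↔ |j| ≤ m := by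
  simp only [backtrackSites, List.mem_append, List.mem_map, List.mem_range, abs_le]
  constructor
  · rintro (⟨i, hi, rfl⟩ | ⟨i, hi, rfl⟩) <;> omega
  · intro hj
    rcases le_or_gt 0 j with h | h
    · exact Or.inl ⟨j.toNat, by omega, by omega⟩
    · exact Or.inr ⟨(-j - 1).toNat, by omega, by omega⟩

lemma nodup_backtrackSites (m : ℕ) : (backtrackSites m).Nodup := by
  refine List.nodup_append'.2 ⟨List.nodup_range.map fun i j h => ?_,
    List.nodup_range.map fun i j h => ?_, ?_⟩
  · exact Nat.cast_injective h
  · simpa using h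
  · simp only [List.disjoint_left, List.mem_map]
    rintro _ ⟨i, -, rfl⟩ ⟨j, -, h⟩
    omega

/- The casts turn `List.range` into a `List ℤ` through the monadic coercion of lists. -/
lemma prod_map_backtrackSites {M : Type*} [Monoid M] (f : ℤ → M) (m : ℕ) :
    ((List.range (m + 1)).map fun j => f (j : ℤ)).prod *
      ((List.range m).map fun j => f (-(j + 1 : ℤ))).prod = ((backtrackSites m).map f).prod := by
  simp only [backtrackSites, bind_pure_comp, List.map_eq_map, List.map_map, List.map_append,
    List.prod_append, Function.comp_def]

end Wreath

open Wreath in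
/-- Let `A` be a nontrivial finite group and `A ≀ ℤ` the wreath
product with symmetric generating set `S = (A ∖ {e}) ∪ {t, t⁻¹}`.  Writing
`s_{i,k} = tⁱ s_k t⁻ⁱ` for `s_k ∈ A ∖ {e}`, for all `m ≥ 1`, `0 < |l| < m` and all
choices `c j ∈ A ∖ {e}` (`−m ≤ j ≤ m`), the element
`g = s_{0,c 0} s_{1,c 1} ⋯ s_{m,c m} s_{-1,c(-1)} ⋯ s_{-m,c(-m)} t^l`
has positive comparison curvature. -/
theorem wreath_backtrack_pos_curv (A : Type*) [Group A] [Finite A] [Nontrivial A]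
    (m : ℕ) (hm : 1 ≤ m) (l : ℤ) (hl : 0 < |l|) (hlm : |l| < (m : ℤ))
    (c : ℤ → A) (hc : ∀ j : ℤ, |j| ≤ (m : ℤ) → c j ≠ 1) :
    0 < MedScale.curv (SW A)
      (((List.range (m + 1)).map fun j => sik A (j : ℤ) (c j)).prod *
        (((List.range m).map fun j => sik A (-(j + 1 : ℤ)) (c (-(j + 1 : ℤ)))).prod) *
        tW A ^ l) := by
  rw [prod_map_backtrackSites fun i => sik A i (c i)]
  set g := ((backtrackSites m).map fun i => sik A i (c i)).prod * tW A ^ l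
  have hpos : pos g = l := by rw [pos_mul, pos_prod_sik, pos_tW_zpow, zero_add]
  have hlit (j : ℤ) (hj : |j| ≤ m) : lamp g j ≠ 1 := by
    rw [lamp_mul_tW_zpow, lamp_prod_sik c (nodup_backtrackSites m),
      if_pos (mem_backtrackSites.2 hj)]
    exact hc j hj
  have hl_bounds := abs_lt.1 hlm
  refine wreath_backtrack_pos_curv_general (hpos ▸ abs_pos.1 hl) (hlit 0 (by simp))
    (hlit _ (hpos ▸ hlm.le)) ⟨-m, ?_, hlit _ (by simp)⟩ ⟨m, ?_, hlit _ (by simp)⟩ <;> omega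
end

section
/- For all integers 1 < m ≤ k, the element h_{k,m} of Houghton's group H₂ has positive comparison curvature: κ(h_{k,m}) > 0 with respect to the generating set {s, s⁻¹, σ}. -/
namespace Houghton

/-- The generator `s` of Houghton's group `H₂`: shift every bead one position to the
right along the bi-infinite string `ℤ ∖ {0}` (extended to fix `0`), i.e.
`s n = n + 1` for `n ≥ 1`, `s (-1) = 1`, and `s n = n + 1` for `n ≤ -2`. -/
def s : Equiv.Perm ℤ where
  toFun n := if n = 0 then 0 else if n = -1 then 1 else n + 1
  invFun n := if n = 0 then 0 else if n = 1 then -1 else n - 1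
  left_inv := by
    intro n
    beta_reduce
    split_ifs <;> first | omega | exact (‹False›).elim
  right_inv := by
    intro n
    beta_reduce
    split_ifs <;> first | omega | exact (‹False›).elim

/-- The generator `σ` of Houghton's group `H₂`: the transposition exchanging `-1` and `1`. -/
def σ : Equiv.Perm ℤ := Equiv.swap (-1) 1

/-- The standard symmetric generating set `{s, s⁻¹, σ}` of Houghton's group `H₂`. -/
def S : Set (Equiv.Perm ℤ) := {s, s⁻¹, σ}

/-- Houghton's group `H₂`, as the group generated by `s` and `σ` (equivalently, the
permutations of `ℤ ∖ {0}` that agree with a translation outside a finite set). -/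
def H₂ : Subgroup (Equiv.Perm ℤ) := Subgroup.closure {s, σ}

/-- The element `h_{k,m}` exchanging `l` and `-l` for every `m ≤ l ≤ k`
and fixing all other points. -/
def h (k m : ℕ) : Equiv.Perm ℤ where
  toFun n := if m ≤ n.natAbs ∧ n.natAbs ≤ k then -n else n
  invFun n := if m ≤ n.natAbs ∧ n.natAbs ≤ k then -n else n
  left_inv := by
    intro n; dsimp only
    by_cases hc : m ≤ n.natAbs ∧ n.natAbs ≤ k
    · rw [if_pos hc, if_pos (by simpa [Int.natAbs_neg] using hc), neg_neg]
    · rw [if_neg hc, if_neg hc]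
  right_inv := by
    intro n; dsimp only
    by_cases hc : m ≤ n.natAbs ∧ n.natAbs ≤ k
    · rw [if_pos hc, if_pos (by simpa [Int.natAbs_neg] using hc), neg_neg]
    · rw [if_neg hc, if_neg hc]

end Houghton

/-!
A word in `s`, `s⁻¹`, `σ` describes a tour of a cursor along the gaps of the string: `s^{±1}` moves
the cursor to a neighbouring gap and `σ` exchanges the two beads next to it. An exchange creates at
most one inversion. Moving beads across the centre takes crossings: each outward crossing of
distance `p` by the cursor can carry one bead to the other side, except the first, which can carry
none. With the cursor at gap `t`, the quantity
`#inversions + 2 * ∑ p, (outward crossings of distance p) - |t|` rises by at most one per letter;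
bounding the crossings from below by the beads carried across gives the lower bound in
`|h_{k,m}| = ∑_{j = m}^k (8 j - 7) + 2 (k - 1)`. It is attained by exchanging the pairs `{j, -j}`,
`j = m, …, k`, one after the other; starting and finishing at gap `1` instead of gap `0` then saves
one step at each end when `m > 1`. So conjugation by `s`, and by symmetry conjugation by `s⁻¹`,
shortens `h_{k,m}`, while `σ` commutes with it.
-/

namespace MedScale

open scoped Pointwise

variable {G : Type*} [Group G] {S : Set G} {g : G} {n : ℕ}

theorem mem_pow_iff_exists_list :
    g ∈ S ^ n ↔ ∃ l : List G, (∀ x ∈ l, x ∈ S) ∧ l.prod = g ∧ l.length = n := by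
  rw [Set.mem_pow]
  constructor
  · rintro ⟨f, rfl⟩
    exact ⟨_, by simp [List.mem_ofFn], rfl, List.length_ofFn⟩
  · rintro ⟨l, hl, rfl, rfl⟩
    exact ⟨fun i => ⟨l.get i, hl _ (l.get_mem i)⟩, congrArg List.prod (List.ofFn_get l)⟩

theorem wlen_eq_sInf (S : Set G) (g : G) : wlen S g = sInf {n | g ∈ S ^ n} := by
  simp only [wlen, mem_pow_iff_exists_list]

theorem wlen_le_of_mem_pow (hg : g ∈ S ^ n) : wlen S g ≤ n :=
  wlen_eq_sInf S g ▸ Nat.sInf_le hg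

theorem mem_pow_wlen_of_mem_pow (hg : g ∈ S ^ n) : g ∈ S ^ wlen S g :=
  wlen_eq_sInf S g ▸ Nat.sInf_mem (s := {n | g ∈ S ^ n}) ⟨n, hg⟩

theorem wlen_mulEquiv (φ : G ≃* G) (hφ : φ '' S = S) (g : G) : wlen S (φ g) = wlen S g := by
  have mem_iff (n : ℕ) : φ g ∈ S ^ n ↔ g ∈ S ^ n := by
    conv_lhs => rw [← hφ, ← Set.image_pow]
    exact φ.injective.mem_set_image
  simp only [wlen_eq_sInf, mem_iff]

theorem genCon_lt_wlen (hS : S.Finite) (hle : ∀ u ∈ S, wlen S (u⁻¹ * g * u) ≤ wlen S g)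
    (hlt : ∃ u ∈ S, wlen S (u⁻¹ * g * u) < wlen S g) : genCon S g < wlen S g := by
  have card_pos : (0 : ℝ) < Nat.card S := by
    have : Nonempty S := let ⟨u, hu, _⟩ := hlt; ⟨u, hu⟩
    have : Finite S := hS
    exact_mod_cast Nat.card_pos
  have sum_lt : ∑ u ∈ hS.toFinset, (wlen S (u⁻¹ * g * u) : ℝ) <
      ∑ _u ∈ hS.toFinset, (wlen S g : ℝ) := by
    refine Finset.sum_lt_sum (fun u hu => ?_) ?_
    · exact_mod_cast hle u (hS.mem_toFinset.1 hu)
    · obtain ⟨u, hu, hlt⟩ := hlt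
      exact ⟨u, hS.mem_toFinset.2 hu, by exact_mod_cast hlt⟩
  rw [Finset.sum_const, nsmul_eq_mul, ← Set.ncard_eq_toFinset_card S hS,
    ← Nat.card_coe_set_eq] at sum_lt
  rwa [genCon, finsum_mem_eq_finite_toFinset_sum _ hS, one_div, inv_mul_lt_iff₀ card_pos]

theorem curv_pos (hS : S.Finite) (hle : ∀ u ∈ S, wlen S (u⁻¹ * g * u) ≤ wlen S g)
    (hlt : ∃ u ∈ S, wlen S (u⁻¹ * g * u) < wlen S g) : 0 < curv S g := by
  have wlen_pos : 0 < wlen S g := let ⟨_, _, hu⟩ := hlt; Nat.zero_lt_of_lt hu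
  exact div_pos (sub_pos.2 (genCon_lt_wlen hS hle hlt)) (Nat.cast_pos.2 wlen_pos)

end MedScale

namespace Houghton

open Finset
open scoped Pointwise

theorem s_apply (n : ℤ) : s n = if n = 0 then 0 else if n = -1 then 1 else n + 1 := rfl

theorem s_inv_apply (n : ℤ) : s⁻¹ n = if n = 0 then 0 else if n = 1 then -1 else n - 1 := rfl

theorem h_apply (k m : ℕ) (n : ℤ) :
    h k m n = if m ≤ n.natAbs ∧ n.natAbs ≤ k then -n else n := rfl

theorem s_mem_S : s ∈ S := Or.inl rfl

theorem s_inv_mem_S : s⁻¹ ∈ S := Or.inr (Or.inl rfl)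

theorem σ_mem_S : σ ∈ S := Or.inr (Or.inr rfl)

theorem finite_S : S.Finite := Set.toFinite {s, s⁻¹, σ}

theorem σ_inv : σ⁻¹ = σ := Equiv.swap_inv _ _

/-- The enumeration of `ℤ ∖ {0}` by `ℤ` along the string; the shift `s` becomes `i ↦ i + 1`. -/
def bead (i : ℤ) : ℤ := if 0 ≤ i then i + 1 else i

theorem bead_strictMono : StrictMono bead := fun i j hij => by grind [bead]

theorem s_bead (i : ℤ) : s (bead i) = bead (i + 1) := by grind [bead, s_apply]

theorem s_inv_bead (i : ℤ) : s⁻¹ (bead i) = bead (i - 1) := by grind [bead, s_inv_apply]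

theorem s_zpow_bead (t i : ℤ) : (s ^ t) (bead i) = bead (i + t) := by
  induction t using Int.induction_on generalizing i with
  | zero => simp
  | succ n ih => rw [zpow_add_one, Equiv.Perm.mul_apply, s_bead, ih]; congr 1; ring
  | pred n ih =>
    rw [zpow_sub_one, Equiv.Perm.mul_apply, s_inv_bead, ih]; congr 1; ring

/-- The transposition of the two beads on either side of gap `t`, where gap `0` is the one
between `-1` and `1`. -/
def adjSwap (t : ℤ) : Equiv.Perm ℤ := Equiv.swap (bead (t - 1)) (bead t)

theorem s_zpow_mul_σ (t : ℤ) : s ^ t * σ = adjSwap t * s ^ t := by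
  have left : (s ^ t) (-1) = bead (t - 1) := by
    simpa [bead, sub_eq_neg_add] using s_zpow_bead t (-1)
  have right : (s ^ t) 1 = bead t := by simpa [bead] using s_zpow_bead t 0
  rw [σ, Equiv.mul_swap_eq_swap_mul, left, right, adjSwap]

theorem adjSwap_apply (t x : ℤ) : adjSwap t x =
    if x = bead (t - 1) then bead t else if x = bead t then bead (t - 1) else x :=
  Equiv.swap_apply_def _ _ _

theorem adjSwap_zero (t : ℤ) : adjSwap t 0 = 0 := by grind [adjSwap_apply, bead]

/-- `Tour t π n`: a cursor walking along the gaps of the string from gap `0`, paying one unit to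
move to a neighbouring gap and one unit to exchange the two beads next to it, can have brought
bead `x` to position `π x` for every `x` and stand at gap `t` after spending `n` units. -/
inductive Tour : ℤ → Equiv.Perm ℤ → ℕ → Prop
  | nil : Tour 0 1 0
  | right {t : ℤ} {π : Equiv.Perm ℤ} {n : ℕ} : Tour t π n → Tour (t + 1) π (n + 1)
  | left {t : ℤ} {π : Equiv.Perm ℤ} {n : ℕ} : Tour t π n → Tour (t - 1) π (n + 1)
  | swap {t : ℤ} {π : Equiv.Perm ℤ} {n : ℕ} : Tour t π n → Tour t (adjSwap t * π) (n + 1)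

theorem exists_tour_of_mem_pow {g : Equiv.Perm ℤ} {n : ℕ} (hg : g ∈ S ^ n) :
    ∃ t : ℤ, Tour t (s ^ t * g) n := by
  induction n generalizing g with
  | zero => exact ⟨0, by simpa [Set.mem_one.1 (pow_zero S ▸ hg)] using Tour.nil⟩
  | succ n ih =>
    rw [pow_succ'] at hg
    obtain ⟨a, ha, g, hg, rfl⟩ := hg
    obtain ⟨t, tour⟩ := ih hg
    rcases ha with rfl | rfl | rfl
    · exact ⟨t - 1, by simpa [← mul_assoc, ← zpow_add_one] using tour.left⟩
    · exact ⟨t + 1, by simpa [zpow_add_one, mul_assoc] using tour.right⟩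
    · exact ⟨t, by simpa [← mul_assoc, s_zpow_mul_σ] using tour.swap⟩

namespace Tour

variable {t : ℤ} {π : Equiv.Perm ℤ} {n : ℕ}

theorem apply_zero (tour : Tour t π n) : π 0 = 0 := by
  induction tour with
  | nil => rfl
  | right _ ih | left _ ih => exact ih
  | swap _ ih => rw [Equiv.Perm.mul_apply, ih, adjSwap_zero]

theorem finite_support (tour : Tour t π n) : {x | π x ≠ x}.Finite := by
  induction tour with
  | nil => simp
  | right _ ih | left _ ih => exact ih
  | @swap t π _ _ ih =>
    refine (ih.union (Set.toFinite {bead (t - 1), bead t})).subset fun x hx => ?_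
    by_contra hfix
    obtain ⟨hleft, hright, hπ⟩ : x ≠ bead (t - 1) ∧ x ≠ bead t ∧ π x = x := by simpa using hfix
    exact hx (by rw [Equiv.Perm.mul_apply, hπ, adjSwap,
      Equiv.swap_apply_of_ne_of_ne hleft hright])

end Tour

theorem eq_zero_of_finite_support_s_zpow_mul {g : Equiv.Perm ℤ} {t : ℤ}
    (hg : {x | g x ≠ x}.Finite) (hs : {x | (s ^ t * g) x ≠ x}.Finite) : t = 0 := by
  obtain ⟨_, ⟨i, rfl⟩, hi⟩ := (Set.infinite_range_of_injective
    bead_strictMono.injective).exists_notMem_finite (hg.union hs)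
  obtain ⟨hgi, hsi⟩ : g (bead i) = bead i ∧ (s ^ t) (g (bead i)) = bead i := by simpa using hi
  rw [hgi, s_zpow_bead] at hsi
  simpa using bead_strictMono.injective hsi

/-- The pairs of beads from `B` whose order on the string is reversed by `π`. -/
def inversions (B : Finset ℤ) (π : Equiv.Perm ℤ) : Finset (ℤ × ℤ) :=
  {q ∈ B ×ˢ B | q.1 < q.2 ∧ π q.2 < π q.1}

theorem inversions_one (B : Finset ℤ) : inversions B 1 = ∅ := by
  rw [inversions, filter_eq_empty_iff]
  intro q _
  simpa using fun hq : q.1 < q.2 => hq.le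

theorem card_inversions_adjSwap_mul_le {B : Finset ℤ} (hB : 0 ∉ B) {π : Equiv.Perm ℤ}
    (hπ : π 0 = 0) (t : ℤ) :
    #(inversions B (adjSwap t * π)) ≤ #(inversions B π) + 1 := by
  refine (card_le_card (subset_iff.2 fun (x, y) hxy => ?_)).trans
    (card_insert_le (π⁻¹ (bead (t - 1)), π⁻¹ (bead t)) _)
  obtain ⟨hmem, hlt, hinv⟩ := mem_filter.1 hxy
  obtain ⟨hx, hy⟩ := mem_product.1 hmem
  rw [Equiv.Perm.mul_apply, Equiv.Perm.mul_apply] at hinv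
  have ne_zero {z : ℤ} (hz : z ∈ B) : π z ≠ 0 := fun h0 =>
    hB (π.injective (h0.trans hπ.symm) ▸ hz)
  have hx0 := ne_zero hx
  have hy0 := ne_zero hy
  rw [mem_insert, inversions, mem_filter, Prod.mk.injEq, Equiv.Perm.eq_inv_iff_eq,
    Equiv.Perm.eq_inv_iff_eq]
  by_cases hold : π y < π x
  · exact Or.inr ⟨hmem, hlt, hold⟩
  · left
    have hne : π x ≠ π y := π.injective.ne hlt.ne
    grind [adjSwap_apply, bead]

/-- Level `p` consists of the gaps and positions at distance `p` from the centre. Bead `x`,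
initially outside level `p`, is carried if it has moved to the outside of level `p` on the opposite
side. A bead in position exactly `±p` already counts while the cursor is at level `p` or beyond on
that side, because it can then be exchanged outwards without a further crossing of level `p`. -/
def Carried (p : ℕ) (t : ℤ) (π : Equiv.Perm ℤ) (x : ℤ) : Prop :=
  x < -p ∧ (p < π x ∨ π x = p ∧ p ≤ t) ∨ p < x ∧ (π x < -p ∨ π x = -p ∧ t ≤ -p)

/-- The cursor is inside level `p` and all beads outside level `p` are at home, as in a tour which
has not reached that level yet. -/
def Untouched (p : ℕ) (t : ℤ) (π : Equiv.Perm ℤ) : Prop :=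
  t.natAbs < p ∧ ∀ x : ℤ, p < x.natAbs → π x = x

open Classical in
/-- A lower bound, computed from the state `(t, π)` and the beads in `B`, for the number of times
that the cursor of a tour has crossed level `p` outwards: each such crossing carries at most one
more bead, and the first one carries none. -/
noncomputable def crossings (B : Finset ℤ) (p : ℕ) (t : ℤ) (π : Equiv.Perm ℤ) : ℕ :=
  if Untouched p t π then 0 else 1 + #{x ∈ B | Carried p t π x}

section Crossings

variable {B : Finset ℤ} {p : ℕ} {t t' : ℤ} {π : Equiv.Perm ℤ}

theorem carried_adjSwap_mul_iff (hp : 1 ≤ p) {x : ℤ} :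
    Carried p t (adjSwap t * π) x ↔ Carried p t π x := by
  simp only [Carried, Equiv.Perm.mul_apply, adjSwap_apply, bead]
  generalize π x = y
  split_ifs <;> omega

theorem Untouched.adjSwap_mul (hu : Untouched p t π) : Untouched p t (adjSwap t * π) := by
  refine ⟨hu.1, fun x hx => ?_⟩
  have ht := hu.1
  rw [Equiv.Perm.mul_apply, hu.2 x hx]
  grind [adjSwap_apply, bead]

open Classical in
theorem crossings_adjSwap_mul_le (hp : 1 ≤ p) :
    crossings B p t (adjSwap t * π) ≤ crossings B p t π := by
  by_cases hu : Untouched p t π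
  · simp [crossings, hu.adjSwap_mul]
  · have : {x ∈ B | Carried p t (adjSwap t * π) x} = {x ∈ B | Carried p t π x} :=
      filter_congr fun x _ => carried_adjSwap_mul_iff hp
    simp only [crossings, this, if_neg hu]
    split_ifs <;> omega

theorem Untouched.not_carried (hu : Untouched p t π) (x : ℤ) : ¬ Carried p t' π x := by
  intro hx
  have := hu.2 x (by unfold Carried at hx; omega)
  unfold Carried at hx
  omega

open Classical in
theorem card_carried_le_add_one (htt : t' = t + 1 ∨ t' = t - 1) :
    #{x ∈ B | Carried p t' π x} ≤ #{x ∈ B | Carried p t π x} + 1 := by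
  refine (card_le_card (subset_iff.2 fun x hx => ?_)).trans (card_insert_le (π⁻¹ t') _)
  rw [mem_filter, Carried] at hx
  rw [mem_insert, mem_filter, Equiv.Perm.eq_inv_iff_eq, Carried]
  by_cases hxt : π x = t'
  · exact Or.inl hxt
  · exact Or.inr ⟨hx.1, by omega⟩

theorem crossings_move_le_add_one (htt : t' = t + 1 ∨ t' = t - 1) :
    crossings B p t' π ≤ crossings B p t π + 1 := by
  by_cases hu : Untouched p t π
  · simp only [crossings, if_pos hu, hu.not_carried, filter_false, card_empty]
    split_ifs <;> omega
  · have := card_carried_le_add_one (B := B) (p := p) (π := π) htt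
    simp only [crossings, if_neg hu]
    split_ifs <;> omega

theorem crossings_le_of_not_outward (hp : 1 ≤ p) (htt : t' = t + 1 ∨ t' = t - 1)
    (hout : ¬ (t.natAbs < t'.natAbs ∧ p = t'.natAbs)) :
    crossings B p t' π ≤ crossings B p t π := by
  classical
  by_cases hu : Untouched p t π
  · have hu' : Untouched p t' π := ⟨by have := hu.1; omega, hu.2⟩
    simp [crossings, hu']
  · have : #{x ∈ B | Carried p t' π x} ≤ #{x ∈ B | Carried p t π x} :=
      card_le_card (monotone_filter_right _ fun x _ hx => by unfold Carried at *; omega)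
    simp only [crossings, if_neg hu]
    split_ifs <;> omega

theorem crossings_move_le (hp : 1 ≤ p) (htt : t' = t + 1 ∨ t' = t - 1) :
    crossings B p t' π ≤
      crossings B p t π + if p = t'.natAbs then t'.natAbs - t.natAbs else 0 := by
  split_ifs with hpt
  · rcases le_or_gt t'.natAbs t.natAbs with hle | hlt
    · exact (crossings_le_of_not_outward hp htt (by omega)).trans (Nat.le_add_right _ _)
    · exact (crossings_move_le_add_one htt).trans (by omega)
  · exact crossings_le_of_not_outward hp htt (by omega)

end Crossings

/-- The potential of the state `(t, π)` of a tour, which rises by at most one per unit spent. In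
`2 * ∑ p, crossings B p t π`, each outward crossing is paid together with an inward one; the term
`-|t|` refunds the inward crossings not yet made. -/
noncomputable def potential (B : Finset ℤ) (k : ℕ) (t : ℤ) (π : Equiv.Perm ℤ) : ℤ :=
  #(inversions B π) + 2 * ∑ p ∈ Ico 1 k, (crossings B p t π : ℤ) - |t|

section Potential

variable {B : Finset ℤ} {t t' : ℤ} {π : Equiv.Perm ℤ}

theorem potential_zero_one (B : Finset ℤ) (k : ℕ) : potential B k 0 1 = 0 := by
  have untouched : ∀ p ∈ Ico 1 k, (crossings B p 0 1 : ℤ) = 0 := fun p hp => by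
    have : 1 ≤ p := (mem_Ico.1 hp).1
    simp [crossings, Untouched, show 0 < p by omega]
  simp [potential, inversions_one, sum_eq_zero untouched]

theorem potential_adjSwap_mul_le (hB : 0 ∉ B) (k : ℕ) (hπ : π 0 = 0) :
    potential B k t (adjSwap t * π) ≤ potential B k t π + 1 := by
  have hinv := card_inversions_adjSwap_mul_le hB hπ t
  have hsum : ∑ p ∈ Ico 1 k, (crossings B p t (adjSwap t * π) : ℤ) ≤
      ∑ p ∈ Ico 1 k, (crossings B p t π : ℤ) :=
    sum_le_sum fun p hp => by exact_mod_cast crossings_adjSwap_mul_le (mem_Ico.1 hp).1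
  unfold potential
  omega

theorem sum_crossings_move_le (B : Finset ℤ) (k : ℕ) (π : Equiv.Perm ℤ)
    (htt : t' = t + 1 ∨ t' = t - 1) :
    ∑ p ∈ Ico 1 k, crossings B p t' π ≤
      ∑ p ∈ Ico 1 k, crossings B p t π + (t'.natAbs - t.natAbs) := by
  refine (sum_le_sum fun p hp => crossings_move_le (mem_Ico.1 hp).1 htt).trans ?_
  rw [sum_add_distrib, sum_ite_eq']
  split_ifs <;> omega

theorem potential_move_le (B : Finset ℤ) (k : ℕ) (π : Equiv.Perm ℤ)
    (htt : t' = t + 1 ∨ t' = t - 1) : potential B k t' π ≤ potential B k t π + 1 := by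
  have := sum_crossings_move_le B k π htt
  unfold potential
  rw [← Nat.cast_sum, ← Nat.cast_sum, Int.abs_eq_natAbs, Int.abs_eq_natAbs]
  omega

theorem Tour.potential_le {n : ℕ} (tour : Tour t π n) (hB : 0 ∉ B) (k : ℕ) :
    potential B k t π ≤ n := by
  induction tour with
  | nil => exact (potential_zero_one B k).le
  | @right t π n _ ih =>
    have := potential_move_le B k π (Or.inl (rfl : t + 1 = t + 1))
    omega
  | @left t π n _ ih =>
    have := potential_move_le B k π (Or.inr (rfl : t - 1 = t - 1))
    omega
  | @swap t π n tour ih =>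
    have := potential_adjSwap_mul_le (t := t) hB k tour.apply_zero
    omega

theorem potential_le_of_mem_pow {g : Equiv.Perm ℤ} {n : ℕ} (hg : g ∈ S ^ n)
    (hfin : {x | g x ≠ x}.Finite) (hB : 0 ∉ B) (k : ℕ) : potential B k 0 g ≤ n := by
  obtain ⟨t, tour⟩ := exists_tour_of_mem_pow hg
  obtain rfl : t = 0 := eq_zero_of_finite_support_s_zpow_mul hfin tour.finite_support
  simpa using tour.potential_le hB k

end Potential

section Reversal

variable {k m : ℕ}

theorem finite_support_h (k m : ℕ) : {x | h k m x ≠ x}.Finite := by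
  refine (Set.finite_Icc (-(k : ℤ)) k).subset fun x hx => ?_
  rw [Set.mem_ofPred_eq, h_apply] at hx
  rw [Set.mem_Icc]
  split_ifs at hx <;> omega

/-- The positions at distance at most `k` from the centre of the string. -/
noncomputable def centralBeads (k : ℕ) : Finset ℤ := (Icc (-(k : ℤ)) k).erase 0

theorem mem_centralBeads {x : ℤ} : x ∈ centralBeads k ↔ x ≠ 0 ∧ x.natAbs ≤ k := by
  rw [centralBeads, mem_erase, mem_Icc]
  omega

theorem le_card_inversions_h_filter {j : ℕ} (hm : 1 ≤ m) (hmj : m ≤ j) (hjk : j ≤ k) :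
    4 * j - 3 ≤
      #{q ∈ inversions (centralBeads k) (h k m) | max q.1.natAbs q.2.natAbs = j} := by
  let fromLeft : Finset (ℤ × ℤ) := {-(j : ℤ)} ×ˢ (Ioc (-(j : ℤ)) j).erase 0
  let toRight : Finset (ℤ × ℤ) := (Ioo (-(j : ℤ)) j).erase 0 ×ˢ {(j : ℤ)}
  have disjoint : Disjoint fromLeft toRight := by
    rw [disjoint_left]
    simp only [fromLeft, toRight, mem_product, mem_singleton, mem_erase, mem_Ioo]
    omega
  have card_left : #fromLeft = 2 * j - 1 := by
    rw [card_product, card_singleton, card_erase_of_mem (mem_Ioc.2 (by omega)), Int.card_Ioc]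
    omega
  have card_right : #toRight = 2 * j - 2 := by
    rw [card_product, card_singleton, card_erase_of_mem (mem_Ioo.2 (by omega)), Int.card_Ioo]
    omega
  calc 4 * j - 3 = #(fromLeft ∪ toRight) := by
        rw [card_union_of_disjoint disjoint, card_left, card_right]; omega
    _ ≤ _ := card_le_card (subset_iff.2 fun q hq => by
        simp only [fromLeft, toRight, mem_union, mem_product, mem_singleton, mem_erase, mem_Ioc,
          mem_Ioo] at hq
        rw [mem_filter, inversions, mem_filter, mem_product, mem_centralBeads,
          mem_centralBeads, h_apply, h_apply]
        split_ifs <;> omega)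

theorem sum_le_card_inversions_h (hm : 1 ≤ m) :
    ∑ j ∈ Icc m k, (4 * j - 3) ≤ #(inversions (centralBeads k) (h k m)) :=
  calc ∑ j ∈ Icc m k, (4 * j - 3)
      ≤ ∑ j ∈ Icc m k,
          #{q ∈ inversions (centralBeads k) (h k m) | max q.1.natAbs q.2.natAbs = j} :=
        sum_le_sum fun _ hj => le_card_inversions_h_filter hm (mem_Icc.1 hj).1 (mem_Icc.1 hj).2
    _ = _ := sum_card_fiberwise_eq_card_filter _ _ _
    _ ≤ #(inversions (centralBeads k) (h k m)) := card_filter_le _ _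

open Classical in
theorem two_mul_card_le_card_carried_h (k m p : ℕ) :
    2 * #{j ∈ Icc m k | p < j} ≤ #{x ∈ centralBeads k | Carried p 0 (h k m) x} :=
  calc 2 * #{j ∈ Icc m k | p < j}
      ≤ ∑ j ∈ Icc m k with p < j,
          #{x ∈ {x ∈ centralBeads k | Carried p 0 (h k m) x} | x.natAbs = j} := by
        rw [mul_comm, ← smul_eq_mul]
        refine card_nsmul_le_sum _ _ _ fun j hj => ?_
        simp only [mem_filter, mem_Icc] at hj
        rw [← card_pair (show (j : ℤ) ≠ -j by omega)]
        refine card_le_card (subset_iff.2 fun x hx => ?_)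
        rw [mem_insert, mem_singleton] at hx
        rw [mem_filter, mem_filter, mem_centralBeads, Carried, h_apply]
        split_ifs <;> omega
    _ = _ := sum_card_fiberwise_eq_card_filter _ _ _
    _ ≤ #{x ∈ centralBeads k | Carried p 0 (h k m) x} := card_filter_le _ _

theorem le_crossings_h {p : ℕ} (hmk : m ≤ k) (hp : p < k) :
    1 + 2 * #{j ∈ Icc m k | p < j} ≤ crossings (centralBeads k) p 0 (h k m) := by
  have touched : ¬ Untouched p 0 (h k m) := fun hu => by
    have := hu.2 k (by omega)
    rw [h_apply, if_pos (by omega)] at this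
    omega
  rw [crossings, if_neg touched]
  exact Nat.add_le_add_left (two_mul_card_le_card_carried_h k m p) 1

theorem sum_card_filter_lt (k m : ℕ) :
    ∑ p ∈ Ico 1 k, #{j ∈ Icc m k | p < j} = ∑ j ∈ Icc m k, (j - 1) := by
  refine (sum_card_bipartiteAbove_eq_sum_card_bipartiteBelow _).trans (sum_congr rfl fun j hj => ?_)
  have : bipartiteBelow (· < ·) (Ico 1 k) j = Ico 1 j := by
    ext p
    simp only [bipartiteBelow, mem_filter, mem_Ico, mem_Icc] at hj ⊢
    omega
  rw [this, Nat.card_Ico]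

theorem sum_add_le_of_h_mem_pow {n : ℕ} (hm : 1 ≤ m) (hmk : m ≤ k) (hn : h k m ∈ S ^ n) :
    ∑ j ∈ Icc m k, (8 * j - 7) + 2 * (k - 1) ≤ n := by
  have hpot : potential (centralBeads k) k 0 (h k m) ≤ n :=
    potential_le_of_mem_pow hn (finite_support_h k m) (by simp [centralBeads]) k
  have hinv := sum_le_card_inversions_h (k := k) hm
  have hcross : (k - 1) + 2 * ∑ j ∈ Icc m k, (j - 1) ≤
      ∑ p ∈ Ico 1 k, crossings (centralBeads k) p 0 (h k m) := by
    refine le_trans (le_of_eq ?_) (sum_le_sum fun p hp => le_crossings_h hmk (mem_Ico.1 hp).2)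
    simp [sum_add_distrib, ← mul_sum, sum_card_filter_lt k m]
  have hsplit : ∑ j ∈ Icc m k, (8 * j - 7) =
      ∑ j ∈ Icc m k, (4 * j - 3) + 4 * ∑ j ∈ Icc m k, (j - 1) := by
    rw [mul_sum, ← sum_add_distrib]
    refine sum_congr rfl fun j hj => ?_
    have := (mem_Icc.1 hj).1
    omega
  rw [potential, ← Nat.cast_sum, abs_zero] at hpot
  omega

theorem s_zpow_mem_pow (t : ℤ) : s ^ t ∈ S ^ t.natAbs := by
  obtain ⟨n, rfl | rfl⟩ := t.eq_nat_or_neg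
  · simpa using Set.pow_mem_pow s_mem_S
  · simpa using Set.pow_mem_pow (n := n) s_inv_mem_S

theorem swap_neg_one_mem_pow {n : ℕ} (hn : 1 ≤ n) :
    Equiv.swap (-(n : ℤ)) 1 ∈ S ^ (4 * n - 3) := by
  induction n, hn using Nat.le_induction with
  | base => simpa [σ] using σ_mem_S
  | succ n hn ih =>
    have left : (σ * s⁻¹) (-n) = -(n + 1 : ℕ) := by
      rw [Equiv.Perm.mul_apply, s_inv_apply, if_neg (by omega), if_neg (by omega), σ,
        Equiv.swap_apply_of_ne_of_ne (by omega) (by omega)]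
      omega
    have right : (σ * s⁻¹) 1 = 1 := by
      rw [Equiv.Perm.mul_apply, s_inv_apply]
      simp [σ]
    have conj := Equiv.swap_apply_apply (σ * s⁻¹) (-(n : ℤ)) 1
    rw [left, right, mul_inv_rev, inv_inv, σ_inv] at conj
    have mem := Set.mul_mem_mul (Set.mul_mem_mul (Set.mul_mem_mul σ_mem_S s_inv_mem_S) ih)
      (Set.mul_mem_mul s_mem_S σ_mem_S)
    rw [conj, show 4 * (n + 1) - 3 = 1 + 1 + (4 * n - 3) + (1 + 1) by omega]
    simpa only [pow_add, pow_one] using mem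

theorem swap_neg_self_eq_conj {j : ℕ} (hj : 1 ≤ j) :
    Equiv.swap (-(j : ℤ)) j =
      s ^ ((j : ℤ) - 1) * Equiv.swap (-((2 * j - 1 : ℕ) : ℤ)) 1 * s ^ (1 - (j : ℤ)) := by
  have left : (s ^ ((j : ℤ) - 1)) (-((2 * j - 1 : ℕ) : ℤ)) = -j := by
    have := s_zpow_bead (j - 1) (-((2 * j - 1 : ℕ) : ℤ))
    unfold bead at this
    grind
  have right : (s ^ ((j : ℤ) - 1)) 1 = j := by
    have := s_zpow_bead (j - 1) 0
    unfold bead at this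
    grind
  rw [← neg_sub (j : ℤ) 1, zpow_neg, ← Equiv.swap_apply_apply, left, right]

theorem h_self (m : ℕ) : h m m = Equiv.swap (-(m : ℤ)) m := by
  ext x
  rw [h_apply, Equiv.swap_apply_def]
  split_ifs <;> omega

theorem h_succ {k m : ℕ} (hmk : m ≤ k) :
    h (k + 1) m = h k m * Equiv.swap (-((k + 1 : ℕ) : ℤ)) (k + 1 : ℕ) := by
  ext x
  rw [Equiv.Perm.mul_apply, h_apply, h_apply, Equiv.swap_apply_def]
  split_ifs <;> omega

theorem exists_h_eq_s_zpow_mul {k m : ℕ} (hm : 1 ≤ m) (hmk : m ≤ k) :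
    ∃ w ∈ S ^ (∑ j ∈ Icc m k, (8 * j - 7) + (k - m)),
      h k m = s ^ ((m : ℤ) - 1) * w * s ^ (1 - (k : ℤ)) := by
  have turn_mem {j : ℕ} (hj : 1 ≤ j) :
      Equiv.swap (-((2 * j - 1 : ℕ) : ℤ)) 1 ∈ S ^ (8 * j - 7) := by
    convert swap_neg_one_mem_pow (show 1 ≤ 2 * j - 1 by omega) using 2
    omega
  induction k, hmk using Nat.le_induction with
  | base => exact ⟨_, by simpa using turn_mem hm, by rw [h_self, swap_neg_self_eq_conj hm]⟩
  | succ k hmk ih =>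
    obtain ⟨w, hw, hk⟩ := ih
    refine ⟨w * s * Equiv.swap (-((2 * (k + 1) - 1 : ℕ) : ℤ)) 1, ?_, ?_⟩
    · rw [sum_Icc_succ_top (by omega), show ∑ j ∈ Icc m k, (8 * j - 7) + (8 * (k + 1) - 7) +
        (k + 1 - m) = ∑ j ∈ Icc m k, (8 * j - 7) + (k - m) + 1 + (8 * (k + 1) - 7) by omega,
        pow_add, pow_succ]
      exact Set.mul_mem_mul (Set.mul_mem_mul hw s_mem_S) (turn_mem (by omega))
    · rw [h_succ hmk, hk, swap_neg_self_eq_conj (by omega)]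
      push_cast
      group

theorem s_zpow_conj_h_mem_pow (hm : 1 ≤ m) (hmk : m ≤ k) (i : ℤ) :
    s ^ (-i) * h k m * s ^ i ∈ S ^ (((m : ℤ) - 1 - i).natAbs +
      (∑ j ∈ Icc m k, (8 * j - 7) + (k - m)) + ((k : ℤ) - 1 - i).natAbs) := by
  obtain ⟨w, hw, hh⟩ := exists_h_eq_s_zpow_mul hm hmk
  have conj : s ^ (-i) * h k m * s ^ i = s ^ ((m : ℤ) - 1 - i) * w * s ^ (-((k : ℤ) - 1 - i)) := by
    rw [hh]
    group
  rw [conj, pow_add, pow_add, ← Int.natAbs_neg ((k : ℤ) - 1 - i)]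
  exact Set.mul_mem_mul (Set.mul_mem_mul (s_zpow_mem_pow _) hw) (s_zpow_mem_pow _)

theorem h_mem_pow (hm : 1 ≤ m) (hmk : m ≤ k) :
    h k m ∈ S ^ (∑ j ∈ Icc m k, (8 * j - 7) + 2 * (k - 1)) := by
  have mem := s_zpow_conj_h_mem_pow hm hmk 0
  rw [neg_zero, zpow_zero, one_mul, mul_one] at mem
  convert mem using 2
  omega

theorem s_inv_mul_h_mul_s_mem_pow (hm : 1 < m) (hmk : m ≤ k) :
    s⁻¹ * h k m * s ∈ S ^ (∑ j ∈ Icc m k, (8 * j - 7) + 2 * (k - 2)) := by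
  have mem := s_zpow_conj_h_mem_pow hm.le hmk 1
  rw [zpow_neg_one, zpow_one] at mem
  convert mem using 2
  omega

theorem wlen_h (hm : 1 ≤ m) (hmk : m ≤ k) :
    MedScale.wlen S (h k m) = ∑ j ∈ Icc m k, (8 * j - 7) + 2 * (k - 1) :=
  (MedScale.wlen_le_of_mem_pow (h_mem_pow hm hmk)).antisymm
    (sum_add_le_of_h_mem_pow hm hmk (MedScale.mem_pow_wlen_of_mem_pow (h_mem_pow hm hmk)))

theorem wlen_s_inv_mul_h_mul_s_lt (hm : 1 < m) (hmk : m ≤ k) :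
    MedScale.wlen S (s⁻¹ * h k m * s) < MedScale.wlen S (h k m) := by
  rw [wlen_h hm.le hmk]
  exact (MedScale.wlen_le_of_mem_pow (s_inv_mul_h_mul_s_mem_pow hm hmk)).trans_lt (by omega)

end Reversal

section Reflection

/-- The automorphism of the permutations of the string induced by reversing its direction. -/
def reflection : Equiv.Perm ℤ ≃* Equiv.Perm ℤ := MulAut.conj (Equiv.neg ℤ)

theorem reflection_apply (π : Equiv.Perm ℤ) (x : ℤ) : reflection π x = -π (-x) := rfl

theorem reflection_s : reflection s = s⁻¹ := by
  ext x
  rw [reflection_apply, s_apply, s_inv_apply]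
  split_ifs <;> omega

theorem reflection_σ : reflection σ = σ := by
  ext x
  rw [reflection_apply, σ, Equiv.swap_apply_def, Equiv.swap_apply_def]
  split_ifs <;> omega

theorem reflection_h (k m : ℕ) : reflection (h k m) = h k m := by
  ext x
  rw [reflection_apply, h_apply, h_apply, Int.natAbs_neg]
  split_ifs <;> simp

theorem reflection_image_S : reflection '' S = S := by
  simp only [S, Set.image_insert_eq, Set.image_singleton, map_inv, reflection_s, reflection_σ,
    inv_inv]
  exact Set.insert_comm _ _ _

theorem wlen_s_mul_h_mul_s_inv (k m : ℕ) :
    MedScale.wlen S (s * h k m * s⁻¹) = MedScale.wlen S (s⁻¹ * h k m * s) := by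
  rw [← MedScale.wlen_mulEquiv reflection reflection_image_S (s * h k m * s⁻¹)]
  simp [reflection_s, reflection_h]

end Reflection

theorem σ_inv_mul_h_mul_σ (k m : ℕ) : σ⁻¹ * h k m * σ = h k m := by
  rw [mul_assoc, inv_mul_eq_iff_eq_mul, σ, Equiv.mul_swap_eq_swap_mul, h_apply, h_apply,
    Int.natAbs_neg]
  split_ifs
  · rw [neg_neg, Equiv.swap_comm]
  · rfl

end Houghton

open Houghton in
/-- For `1 < m ≤ k`, the element `h_{k,m}` of Houghton's group `H₂`
has positive comparison curvature with respect to `{s, s⁻¹, σ}`. -/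
theorem houghton_pos_curv (k m : ℕ) (h1 : 1 < m) (h2 : m ≤ k) :
    0 < MedScale.curv S (h k m) := by
  have shorter := wlen_s_inv_mul_h_mul_s_lt h1 h2
  refine MedScale.curv_pos finite_S ?_ ⟨s, s_mem_S, shorter⟩
  rintro u (rfl | rfl | rfl)
  · exact shorter.le
  · rw [inv_inv, wlen_s_mul_h_mul_s_inv]
    exact shorter.le
  · rw [σ_inv_mul_h_mul_σ]
end

section
/- For every integer r ≥ 1 there exist a constant c > 0 and N ∈ ℕ such that for all n ≥ N, each of the three sets {g ∈ B_n : κ_r^𝒮(g) > 0}, {g ∈ B_n : κ_r^𝒮(g) = 0} and {g ∈ B_n : κ_r^𝒮(g) < 0} in the discrete Heisenberg group H(ℤ) has cardinality at least c·|B_n|; that is, elements of positive, zero and negative spherical comparison curvature of radius r each have positive density in H(ℤ). -/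
/-- The discrete Heisenberg group `H(ℤ) = ⟨a, b ∣ [a,b] central⟩`, realized in
Mal'cev coordinates: the element `⟨A, B, C⟩` corresponds to `a^A b^B c^C` with
`c = [a,b]`; equivalently, the group of 3×3 upper unitriangular integer matrices. -/
@[ext] structure Heis where
  x : ℤ
  y : ℤ
  z : ℤ

namespace Heis

instance : Mul Heis := ⟨fun u v => ⟨u.x + v.x, u.y + v.y, u.z + v.z + u.x * v.y⟩⟩
instance : One Heis := ⟨⟨0, 0, 0⟩⟩
instance : Inv Heis := ⟨fun u => ⟨-u.x, -u.y, -u.z + u.x * u.y⟩⟩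

@[simp] lemma mul_x (u v : Heis) : (u * v).x = u.x + v.x := rfl
@[simp] lemma mul_y (u v : Heis) : (u * v).y = u.y + v.y := rfl
@[simp] lemma mul_z (u v : Heis) : (u * v).z = u.z + v.z + u.x * v.y := rfl
@[simp] lemma one_x : (1 : Heis).x = 0 := rfl
@[simp] lemma one_y : (1 : Heis).y = 0 := rfl
@[simp] lemma one_z : (1 : Heis).z = 0 := rfl
@[simp] lemma inv_x (u : Heis) : u⁻¹.x = -u.x := rfl
@[simp] lemma inv_y (u : Heis) : u⁻¹.y = -u.y := rfl
@[simp] lemma inv_z (u : Heis) : u⁻¹.z = -u.z + u.x * u.y := rfl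

instance : Group Heis where
  mul_assoc u v w := by ext <;> simp <;> ring
  one_mul u := by ext <;> simp
  mul_one u := by ext <;> simp
  inv_mul_cancel u := by ext <;> simp <;> ring

/-- The generator `a` of `H(ℤ)`. -/
def a : Heis := ⟨1, 0, 0⟩

/-- The generator `b` of `H(ℤ)`. -/
def b : Heis := ⟨0, 1, 0⟩

/-- The standard symmetric generating set `S = {a, a⁻¹, b, b⁻¹}` of `H(ℤ)`. -/
def S : Set Heis := {a, a⁻¹, b, b⁻¹}

end Heis

/-!
Conjugation by `w` fixes the first two coordinates of `g = (x, y, z)` and turns `z` into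
`z + x * w.y - w.x * y`. For `0 < z ≤ x * y` the length of `g` is `x + y`, so there the curvature
vanishes. For `z` in the strip `(k - 1) * x < z ≤ k * x` with `0 ≤ y ≤ k ≤ x + 1` the length is
`2 * k + x - y`. The term `x * w.y` moves `z` by exactly `w.y` strips, which averages out over the
symmetric sphere, so that the sign of the curvature is decided by the term `w.x * y`: if `z` lies
within `y` of the lower end of its strip, conjugation can only lose a further strip, and it does so
for `w = a ^ r`; if `z` lies within `y` of the upper end, it can only gain one, and it does so for
`w = a ^ (-r)`. Each of the three regions contains boxes with `s ^ 4` elements of length `O(s)`,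
while `|B_n| = O(n ^ 4)`.
-/

namespace MedScale

open scoped Pointwise

variable {G : Type*} [Group G] {S : Set G}

section WordLength

lemma wlen_prod_le_length {l : List G} (hl : ∀ s ∈ l, s ∈ S) : wlen S l.prod ≤ l.length :=
  Nat.sInf_le ⟨l, hl, rfl, rfl⟩

lemma exists_list_length_eq_wlen (hS : Submonoid.closure S = ⊤) (g : G) :
    ∃ l : List G, (∀ s ∈ l, s ∈ S) ∧ l.prod = g ∧ l.length = wlen S g := by
  obtain ⟨l, hl, hg⟩ := Submonoid.exists_list_of_mem_closure (hS ▸ Submonoid.mem_top g)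
  exact Nat.sInf_mem (s := {n | ∃ l : List G, (∀ s ∈ l, s ∈ S) ∧ l.prod = g ∧ l.length = n})
    ⟨l.length, l, hl, hg, rfl⟩

lemma wlen_induction (hS : Submonoid.closure S = ⊤) {P : G → ℕ → Prop} (one : P 1 0)
    (mul_right : ∀ g n, ∀ s ∈ S, P g n → P (g * s) (n + 1)) (g : G) : P g (wlen S g) := by
  obtain ⟨l, hl, rfl, hn⟩ := exists_list_length_eq_wlen hS g
  rw [← hn]
  clear hn
  induction l using List.reverseRecOn with
  | nil => exact one
  | append_singleton l s ih =>
    rw [List.prod_append, List.prod_singleton, List.length_append, List.length_singleton]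
    exact mul_right _ _ s (hl s (by simp)) (ih fun t ht => hl t (by simp [ht]))

lemma wlen_mul_le (hS : Submonoid.closure S = ⊤) (g h : G) :
    wlen S (g * h) ≤ wlen S g + wlen S h := by
  obtain ⟨l, hl, hlg, hln⟩ := exists_list_length_eq_wlen hS g
  obtain ⟨m, hm, hmh, hmn⟩ := exists_list_length_eq_wlen hS h
  rw [← hln, ← hmn, ← hlg, ← hmh, ← List.prod_append, ← List.length_append]
  exact wlen_prod_le_length fun s hs => (List.mem_append.1 hs).elim (hl s) (hm s)

lemma wlen_inv (hS : S⁻¹ = S) (g : G) : wlen S g⁻¹ = wlen S g := by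
  have inv_word : ∀ (g : G) (n : ℕ), (∃ l : List G, (∀ s ∈ l, s ∈ S) ∧ l.prod = g ∧ l.length = n) →
      ∃ l : List G, (∀ s ∈ l, s ∈ S) ∧ l.prod = g⁻¹ ∧ l.length = n := by
    rintro _ _ ⟨l, hl, rfl, rfl⟩
    refine ⟨(l.map fun s => s⁻¹).reverse, fun s hs => ?_, (List.prod_inv_reverse l).symm, by simp⟩
    obtain ⟨t, ht, rfl⟩ := List.mem_map.1 (List.mem_reverse.1 hs)
    exact Set.mem_inv.1 (hS.symm ▸ hl t ht)
  unfold wlen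
  congr 1 with n
  exact ⟨fun h => inv_inv g ▸ inv_word g⁻¹ n h, inv_word g n⟩

lemma wlen_pow_le {s : G} (hs : s ∈ S) (n : ℕ) : wlen S (s ^ n) ≤ n := by
  simpa using wlen_prod_le_length (l := List.replicate n s)
    fun t ht => List.eq_of_mem_replicate ht ▸ hs

lemma wlen_zpow_le (hS : S⁻¹ = S) {s : G} (hs : s ∈ S) (n : ℤ) : (wlen S (s ^ n) : ℤ) ≤ |n| := by
  obtain ⟨m, rfl | rfl⟩ := Int.eq_nat_or_neg n
  · simpa using wlen_pow_le hs m
  · simpa [wlen_inv hS] using wlen_pow_le hs m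

end WordLength

section OddComparison

variable {r : ℕ} {f : G → ℝ} {g : G}

lemma finsum_mem_sphere_eq_zero_of_odd (hS : S⁻¹ = S) (hr : (sphere S r).Finite)
    (hf : ∀ w, f w⁻¹ = -f w) : ∑ᶠ w ∈ sphere S r, f w = 0 := by
  have maps_inv : Set.MapsTo (·⁻¹) (sphere S r) (sphere S r) := fun w hw =>
    (wlen_inv hS w).trans hw
  have bij_inv : Set.BijOn (·⁻¹) (sphere S r) (sphere S r) :=
    Set.InvOn.bijOn ⟨fun w _ => inv_inv w, fun w _ => inv_inv w⟩ maps_inv maps_inv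
  have sum_eq_neg : ∑ᶠ w ∈ sphere S r, -f w = ∑ᶠ w ∈ sphere S r, f w :=
    finsum_mem_eq_of_bijOn _ bij_inv fun w _ => (hf w).symm
  rw [finsum_mem_neg_distrib f hr] at sum_eq_neg
  linarith

lemma wlen_sub_sphereDist_eq (hS : S⁻¹ = S) (hr : (sphere S r).Finite)
    (hne : (sphere S r).Nonempty) (hf : ∀ w, f w⁻¹ = -f w) (g : G) :
    (wlen S g : ℝ) - sphereDist S r g =
      (∑ w ∈ hr.toFinset, ((wlen S g : ℝ) + f w - wlen S (w⁻¹ * g * w))) /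
        (sphere S r).ncard := by
  have sum_f := finsum_mem_sphere_eq_zero_of_odd hS hr hf
  have card_ne : ((sphere S r).ncard : ℝ) ≠ 0 :=
    Nat.cast_ne_zero.2 ((Set.ncard_pos hr).2 hne).ne'
  rw [finsum_mem_eq_finite_toFinset_sum _ hr] at sum_f
  rw [sphereDist, finsum_mem_eq_finite_toFinset_sum _ hr, Nat.card_coe_set_eq,
    Finset.sum_sub_distrib, Finset.sum_add_distrib, sum_f, Finset.sum_const, nsmul_eq_mul,
    ← Set.ncard_eq_toFinset_card _ hr]
  field_simp
  ring

lemma sphereCurv_eq_zero_of_odd (hS : S⁻¹ = S) (hr : (sphere S r).Finite)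
    (hne : (sphere S r).Nonempty) (hf : ∀ w, f w⁻¹ = -f w)
    (heq : ∀ w ∈ sphere S r, (wlen S (w⁻¹ * g * w) : ℝ) = wlen S g + f w) :
    sphereCurv S r g = 0 := by
  rw [sphereCurv, wlen_sub_sphereDist_eq hS hr hne hf,
    Finset.sum_eq_zero fun w hw => by rw [heq w (hr.mem_toFinset.1 hw), sub_self]]
  simp

lemma sphereCurv_pos_of_odd (hS : S⁻¹ = S) (hr : (sphere S r).Finite)
    (hf : ∀ w, f w⁻¹ = -f w) (hg : 0 < wlen S g)
    (hle : ∀ w ∈ sphere S r, (wlen S (w⁻¹ * g * w) : ℝ) ≤ wlen S g + f w)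
    (hlt : ∃ w ∈ sphere S r, (wlen S (w⁻¹ * g * w) : ℝ) < wlen S g + f w) :
    0 < sphereCurv S r g := by
  obtain ⟨v, hv, hlt⟩ := hlt
  rw [sphereCurv, wlen_sub_sphereDist_eq hS hr ⟨v, hv⟩ hf]
  have card_pos : 0 < (sphere S r).ncard := (Set.ncard_pos hr).2 ⟨v, hv⟩
  have sum_pos := Finset.sum_pos' (fun w hw => sub_nonneg.2 (hle w (hr.mem_toFinset.1 hw)))
    ⟨v, hr.mem_toFinset.2 hv, sub_pos.2 hlt⟩
  positivity

lemma sphereCurv_neg_of_odd (hS : S⁻¹ = S) (hr : (sphere S r).Finite)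
    (hf : ∀ w, f w⁻¹ = -f w) (hg : 0 < wlen S g)
    (hge : ∀ w ∈ sphere S r, (wlen S g : ℝ) + f w ≤ wlen S (w⁻¹ * g * w))
    (hgt : ∃ w ∈ sphere S r, (wlen S g : ℝ) + f w < wlen S (w⁻¹ * g * w)) :
    sphereCurv S r g < 0 := by
  obtain ⟨v, hv, hgt⟩ := hgt
  rw [sphereCurv, wlen_sub_sphereDist_eq hS hr ⟨v, hv⟩ hf]
  have card_pos : 0 < (sphere S r).ncard := (Set.ncard_pos hr).2 ⟨v, hv⟩
  have sum_neg := Finset.sum_neg' (fun w hw => sub_nonpos.2 (hge w (hr.mem_toFinset.1 hw)))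
    ⟨v, hr.mem_toFinset.2 hv, sub_neg.2 hgt⟩
  exact div_neg_of_neg_of_pos (div_neg_of_neg_of_pos sum_neg (by positivity)) (by positivity)

end OddComparison

/-- The elements satisfying `P` have positive (lower) density with respect to the word balls of
`S`: up to finitely many radii they make up at least a fixed proportion of the ball. -/
def HasPositiveDensity (S : Set G) (P : G → Prop) : Prop :=
  ∃ c : ℝ, 0 < c ∧ ∀ᶠ n in Filter.atTop,
    c * (Nat.card (ball S n) : ℝ) ≤ (Nat.card {g ∈ ball S n | P g} : ℝ)

end MedScale

namespace Heis

open MedScale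
open scoped Pointwise

section Generators

lemma a_zpow (n : ℤ) : a ^ n = ⟨n, 0, 0⟩ := by
  induction n using Int.induction_on with
  | zero => rfl
  | succ i ih => rw [zpow_add_one, ih]; ext <;> simp [a]
  | pred i ih => rw [zpow_sub_one, ih]; ext <;> simp [a]; ring

lemma b_zpow (n : ℤ) : b ^ n = ⟨0, n, 0⟩ := by
  induction n using Int.induction_on with
  | zero => rfl
  | succ i ih => rw [zpow_add_one, ih]; ext <;> simp [b]
  | pred i ih => rw [zpow_sub_one, ih]; ext <;> simp [b]; ring

lemma a_mem_S : a ∈ S := by simp [S]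

lemma b_mem_S : b ∈ S := by simp [S]

lemma inv_S : S⁻¹ = S := by
  ext g
  simp only [S, Set.mem_inv, Set.mem_insert_iff, Set.mem_singleton_iff, inv_eq_iff_eq_inv, inv_inv]
  tauto

lemma closure_S : Submonoid.closure S = ⊤ := by
  have subgroup_closure : Subgroup.closure S = ⊤ := by
    refine (Subgroup.eq_top_iff' _).2 fun g => ?_
    have ha (n : ℤ) : a ^ n ∈ Subgroup.closure S :=
      zpow_mem (Subgroup.subset_closure a_mem_S) n
    have hb (n : ℤ) : b ^ n ∈ Subgroup.closure S :=
      zpow_mem (Subgroup.subset_closure b_mem_S) n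
    have g_eq : a ^ (1 : ℤ) * b ^ g.z * a ^ (-1 : ℤ) * b ^ (g.y - g.z) * a ^ g.x = g := by
      simp only [a_zpow, b_zpow]
      ext <;> simp
    rw [← g_eq]
    exact mul_mem (mul_mem (mul_mem (mul_mem (ha _) (hb _)) (ha _)) (hb _)) (ha _)
  rw [← Set.union_self S]
  nth_rewrite 2 [← inv_S]
  rw [← Subgroup.closure_toSubmonoid, subgroup_closure, Subgroup.top_toSubmonoid]

end Generators

section WalkBounds

/-- Bounds satisfied by `g` when it is the endpoint of a walk of length `n` in the generators whose
first coordinate stays in `[-q, p]` and which makes `u` steps `b` and `d` steps `b⁻¹`. A step `b^±1`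
made at abscissa `x` changes the last coordinate by `±x`, and a walk on `ℤ` that visits `-q` and `p`
and ends at `x` has at least `2 * (p + q) - |x|` steps. -/
structure WalkBounds (g : Heis) (n p q u d : ℕ) : Prop where
  neg_le_x : -(q : ℤ) ≤ g.x
  x_le : g.x ≤ p
  y_eq : g.y = u - d
  neg_le_z : -(u * q + d * p : ℤ) ≤ g.z
  z_le : g.z ≤ u * p + d * q
  le_length : (2 * (p + q) + u + d : ℤ) ≤ n + |g.x|

namespace WalkBounds

variable {g : Heis} {n p q u d : ℕ}

lemma mul_a (h : WalkBounds g n p q u d) : ∃ p', WalkBounds (g * a) (n + 1) p' q u d := by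
  have mul_a_eq : g * a = ⟨g.x + 1, g.y, g.z⟩ := by ext <;> simp [a]
  obtain ⟨neg_le_x, x_le, y_eq, neg_le_z, z_le, le_length⟩ := h
  rw [mul_a_eq]
  by_cases hp : g.x + 1 ≤ p
  · exact ⟨p, by constructor <;> grind⟩
  · exact ⟨p + 1, by constructor <;> grind⟩

lemma mul_a_inv (h : WalkBounds g n p q u d) : ∃ q', WalkBounds (g * a⁻¹) (n + 1) p q' u d := by
  have mul_a_inv_eq : g * a⁻¹ = ⟨g.x - 1, g.y, g.z⟩ := by ext <;> simp [a, sub_eq_add_neg]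
  obtain ⟨neg_le_x, x_le, y_eq, neg_le_z, z_le, le_length⟩ := h
  rw [mul_a_inv_eq]
  by_cases hq : -(q : ℤ) ≤ g.x - 1
  · exact ⟨q, by constructor <;> grind⟩
  · exact ⟨q + 1, by constructor <;> grind⟩

lemma mul_b (h : WalkBounds g n p q u d) : WalkBounds (g * b) (n + 1) p q (u + 1) d := by
  obtain ⟨neg_le_x, x_le, y_eq, neg_le_z, z_le, le_length⟩ := h
  constructor <;> simp [b] <;> linarith

lemma mul_b_inv (h : WalkBounds g n p q u d) : WalkBounds (g * b⁻¹) (n + 1) p q u (d + 1) := by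
  obtain ⟨neg_le_x, x_le, y_eq, neg_le_z, z_le, le_length⟩ := h
  constructor <;> simp [b] <;> linarith

end WalkBounds

lemma exists_walkBounds (g : Heis) : ∃ p q u d, WalkBounds g (wlen S g) p q u d := by
  refine wlen_induction closure_S (P := fun g n => ∃ p q u d, WalkBounds g n p q u d)
    ⟨0, 0, 0, 0, by constructor <;> simp⟩ ?_ g
  rintro g n s (rfl | rfl | rfl | rfl) ⟨p, q, u, d, h⟩
  · exact h.mul_a.imp fun p' h' => ⟨q, u, d, h'⟩
  · exact ⟨p, h.mul_a_inv.imp fun q' h' => ⟨u, d, h'⟩⟩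
  · exact ⟨p, q, u + 1, d, h.mul_b⟩
  · exact ⟨p, q, u, d + 1, h.mul_b_inv⟩

lemma abs_x_add_abs_y_le_wlen (g : Heis) : |g.x| + |g.y| ≤ wlen S g := by
  obtain ⟨p, q, u, d, h⟩ := exists_walkBounds g
  have := h.neg_le_x
  have := h.x_le
  have := h.y_eq
  have := h.le_length
  grind

lemma abs_z_le_wlen_sq (g : Heis) : |g.z| ≤ (wlen S g : ℤ) ^ 2 := by
  obtain ⟨p, q, u, d, h⟩ := exists_walkBounds g
  have x_le := abs_x_add_abs_y_le_wlen g
  have y_nonneg := abs_nonneg g.y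
  have le_length := h.le_length
  have hx : |g.x| ≤ p + q := abs_le.2 ⟨by linarith [h.neg_le_x], by linarith [h.x_le]⟩
  have z_le : |g.z| ≤ (u + d) * (p + q) := by
    rw [abs_le]
    constructor <;> nlinarith [h.neg_le_z, h.z_le]
  calc |g.z| ≤ (u + d) * (p + q) := z_le
    _ ≤ wlen S g * wlen S g := by gcongr <;> linarith
    _ = (wlen S g : ℤ) ^ 2 := (sq _).symm

lemma two_mul_add_sub_le_wlen {g : Heis} {k : ℤ} (hx : 0 ≤ g.x) (hy : 0 ≤ g.y)
    (hkx : k ≤ g.x + 1) (hz : (k - 1) * g.x < g.z) : 2 * k + g.x - g.y ≤ wlen S g := by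
  obtain ⟨p, q, u, d, h⟩ := exists_walkBounds g
  have le_length := h.le_length
  have x_le_width : g.x ≤ p + q := by linarith [h.x_le]
  have z_le_area : g.z ≤ u * (p + q) := by
    have : (d : ℤ) * q ≤ u * q := by gcongr; linarith [h.y_eq]
    linarith [h.z_le]
  -- Factors `u` and `p + q ≥ x` with sum at most `k - 1 + x` have product at most `(k - 1) * x`.
  have le_half_perimeter : k + g.x ≤ u + (p + q) := by
    by_contra! hlt
    have area_le : (u : ℤ) * (p + q) ≤ (k - 1 + g.x - (p + q)) * (p + q) := by
      gcongr
      linarith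
    have defect_nonneg : 0 ≤ (p + q - g.x) * (p + q - (k - 1)) := by
      apply mul_nonneg <;> linarith
    linarith
  rw [abs_of_nonneg hx] at le_length
  linarith [h.y_eq]

end WalkBounds

section Balls

lemma ball_subset_image_Icc (n : ℕ) :
    ball S n ⊆ (fun p : ℤ × ℤ × ℤ => (⟨p.1, p.2.1, p.2.2⟩ : Heis)) ''
      (Set.Icc (-n : ℤ) n ×ˢ Set.Icc (-n : ℤ) n ×ˢ Set.Icc (-(n : ℤ) ^ 2) (n ^ 2)) := by
  intro g hg
  have hgn : (wlen S g : ℤ) ≤ n := mod_cast hg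
  have hxy := abs_x_add_abs_y_le_wlen g
  have hx : |g.x| ≤ n := by linarith [abs_nonneg g.y]
  have hy : |g.y| ≤ n := by linarith [abs_nonneg g.x]
  have hz : |g.z| ≤ (n : ℤ) ^ 2 := (abs_z_le_wlen_sq g).trans (by gcongr)
  exact ⟨(g.x, g.y, g.z), ⟨abs_le.1 hx, abs_le.1 hy, abs_le.1 hz⟩, rfl⟩

lemma ball_finite (n : ℕ) : (ball S n).Finite :=
  (Set.toFinite _).subset (ball_subset_image_Icc n)

lemma sphere_finite (r : ℕ) : (sphere S r).Finite :=
  (ball_finite r).subset fun _ hg => le_of_eq hg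

lemma card_ball_le {n : ℕ} (hn : 1 ≤ n) : Nat.card (ball S n) ≤ 27 * n ^ 4 := by
  have card_Icc_neg (m : ℕ) : (Set.Icc (-m : ℤ) m).ncard = 2 * m + 1 := by
    rw [← Finset.coe_Icc, Set.ncard_coe_finset, Int.card_Icc]
    lia
  have card_Icc_sq := card_Icc_neg (n ^ 2)
  push_cast at card_Icc_sq
  calc Nat.card (ball S n) ≤ (2 * n + 1) * ((2 * n + 1) * (2 * n ^ 2 + 1)) := by
        rw [Nat.card_coe_set_eq, ← card_Icc_sq, ← card_Icc_neg, ← Set.ncard_prod, ← Set.ncard_prod]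
        exact (Set.ncard_le_ncard (ball_subset_image_Icc n)).trans Set.ncard_image_le
    _ ≤ (3 * n) * ((3 * n) * (3 * n ^ 2)) := by gcongr <;> nlinarith
    _ = 27 * n ^ 4 := by ring

lemma wlen_a_zpow (n : ℤ) : (wlen S (a ^ n) : ℤ) = |n| := by
  have le_wlen := abs_x_add_abs_y_le_wlen (a ^ n)
  simp only [a_zpow, abs_zero, add_zero] at le_wlen
  exact (wlen_zpow_le inv_S a_mem_S n).antisymm (by rwa [a_zpow])

lemma a_zpow_mem_sphere {r : ℕ} {n : ℤ} (hn : |n| = r) : a ^ n ∈ sphere S r :=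
  Nat.cast_injective ((wlen_a_zpow n).trans hn)

lemma abs_x_add_abs_y_le_of_mem_sphere {r : ℕ} {w : Heis} (hw : w ∈ sphere S r) :
    |w.x| + |w.y| ≤ r := by
  have := abs_x_add_abs_y_le_wlen w
  rwa [show wlen S w = r from hw] at this

end Balls

section Length

lemma wlen_le_of_mem_strip {x y z k : ℤ} (hk : 1 ≤ k) (hz : (k - 1) * x ≤ z) (hzk : z ≤ k * x) :
    (wlen S ⟨x, y, z⟩ : ℤ) ≤ |y - k| + x + k := by
  set t := k * x - z with ht
  have word_eq : b ^ (y - k) * a ^ (x - t) * b ^ (1 : ℤ) * a ^ t * b ^ (k - 1) = ⟨x, y, z⟩ := by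
    simp only [a_zpow, b_zpow]
    ext <;> simp [ht]
    ring
  have wlen_a (n : ℤ) := wlen_zpow_le inv_S a_mem_S n
  have wlen_b (n : ℤ) := wlen_zpow_le inv_S b_mem_S n
  have wlen_mul := wlen_mul_le closure_S
  calc (wlen S ⟨x, y, z⟩ : ℤ) ≤ |y - k| + |x - t| + |1| + |t| + |k - 1| := by
        rw [← word_eq]
        grind
    _ = |y - k| + x + k := by
        rw [abs_of_nonneg (a := x - t), abs_of_nonneg (a := t), abs_of_nonneg (a := k - 1),
          abs_one] <;> linarith

lemma wlen_of_le_mul {x y z : ℤ} (hx : 0 < x) (hz : 0 < z) (hzy : z ≤ x * y) :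
    (wlen S ⟨x, y, z⟩ : ℤ) = x + y := by
  obtain ⟨k, hkz, hzk⟩ : ∃ k : ℤ, (k - 1) * x < z ∧ z ≤ k * x := by
    refine ⟨(z - 1) / x + 1, ?_, ?_⟩
    · linarith [Int.ediv_mul_le (z - 1) hx.ne']
    · linarith [Int.lt_ediv_add_one_mul_self (z - 1) hx]
  have one_le_k : 1 ≤ k := by by_contra!; nlinarith
  have k_le_y : k ≤ y := by by_contra!; nlinarith
  have wlen_le := wlen_le_of_mem_strip (y := y) one_le_k hkz.le hzk
  have le_wlen := abs_x_add_abs_y_le_wlen ⟨x, y, z⟩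
  grind

lemma wlen_of_mem_strip {x y z k : ℤ} (hk : 1 ≤ k) (hy : 0 ≤ y) (hyk : y ≤ k) (hkx : k ≤ x + 1)
    (hz : (k - 1) * x < z) (hzk : z ≤ k * x) : (wlen S ⟨x, y, z⟩ : ℤ) = 2 * k + x - y := by
  have wlen_le := wlen_le_of_mem_strip (y := y) hk hz.le hzk
  have le_wlen := two_mul_add_sub_le_wlen (g := ⟨x, y, z⟩) (k := k) (by grind) hy hkx hz
  grind

end Length

section Curvature

lemma conj_eq (x y z : ℤ) (w : Heis) : w⁻¹ * ⟨x, y, z⟩ * w = ⟨x, y, z + x * w.y - w.x * y⟩ := by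
  ext <;> simp
  ring

variable {r : ℕ} {x y z k : ℤ}

lemma sphereCurv_eq_zero_of_le_mul (hx : 0 < x) (hz : r * max x y < z)
    (hzy : z + r * max x y ≤ x * y) : sphereCurv S r ⟨x, y, z⟩ = 0 := by
  have max_nonneg : 0 ≤ r * max x y := mul_nonneg r.cast_nonneg (hx.le.trans (le_max_left x y))
  have y_pos : 0 < y := by by_contra!; nlinarith
  refine sphereCurv_eq_zero_of_odd (f := 0) inv_S (sphere_finite r)
    ⟨_, a_zpow_mem_sphere (n := r) (by simp)⟩ (by simp) fun w hw => ?_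
  have area_le : |x * w.y - w.x * y| ≤ r * max x y := by
    calc |x * w.y - w.x * y| ≤ |x * w.y| + |w.x * y| := abs_sub _ _
      _ = x * |w.y| + |w.x| * y := by rw [abs_mul, abs_mul, abs_of_pos hx, abs_of_pos y_pos]
      _ ≤ max x y * |w.y| + |w.x| * max x y := by gcongr <;> simp
      _ = (|w.x| + |w.y|) * max x y := by ring
      _ ≤ r * max x y := by
        gcongr
        exact abs_x_add_abs_y_le_of_mem_sphere hw
  rw [abs_le] at area_le
  have wlen_eq := wlen_of_le_mul (y := y) (z := z) hx (by linarith) (by linarith)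
  have wlen_conj := wlen_of_le_mul (y := y) (z := z + x * w.y - w.x * y) hx (by linarith)
    (by linarith)
  rw [conj_eq, Pi.zero_apply, add_zero]
  exact_mod_cast wlen_conj.trans wlen_eq.symm

lemma wlen_conj_of_mem_strip {w : Heis} (hw : w ∈ sphere S r) (hy : 0 < y) (hyk : y + r ≤ k)
    (hkx : k + r ≤ x + 1) (hz : (k - 1) * x < z - w.x * y) (hzk : z - w.x * y ≤ k * x) :
    (wlen S (w⁻¹ * ⟨x, y, z⟩ * w) : ℤ) = 2 * (k + w.y) + x - y := by
  obtain ⟨hwy, hwy'⟩ := abs_le.1 (le_of_add_le_of_nonneg_right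
    (abs_x_add_abs_y_le_of_mem_sphere hw) (abs_nonneg w.x))
  rw [conj_eq]
  apply wlen_of_mem_strip <;> linarith

lemma abs_mul_le_of_mem_sphere {w : Heis} (hw : w ∈ sphere S r) (hy : 0 ≤ y) :
    |w.x * y| ≤ r * y := by
  rw [abs_mul, abs_of_nonneg hy]
  gcongr
  exact le_of_add_le_of_nonneg_left (abs_x_add_abs_y_le_of_mem_sphere hw) (abs_nonneg w.y)

lemma sphereCurv_pos_of_mem_strip (hr : 1 ≤ r) (hy : 0 < y) (hyk : y + r + 1 ≤ k)
    (hkx : k + r ≤ x + 1) (hyx : (r + 1) * y ≤ x) (hz : (k - 1) * x < z)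
    (hzy : z ≤ (k - 1) * x + y) : 0 < sphereCurv S r ⟨x, y, z⟩ := by
  have hr' : (1 : ℤ) ≤ r := mod_cast hr
  have y_le_ry : y ≤ r * y := le_mul_of_one_le_left hy.le hr'
  have wlen_eq : (wlen S ⟨x, y, z⟩ : ℤ) = 2 * k + x - y := by
    apply wlen_of_mem_strip <;> linarith
  have wlen_conj_of_lt (w) (hw : w ∈ sphere S r) (hlt : (k - 1) * x < z - w.x * y) :
      (wlen S (w⁻¹ * ⟨x, y, z⟩ * w) : ℤ) = wlen S ⟨x, y, z⟩ + 2 * w.y := by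
    have := (abs_le.1 (abs_mul_le_of_mem_sphere hw hy.le)).1
    rw [wlen_conj_of_mem_strip (k := k) hw hy] <;> linarith
  have wlen_conj_of_le (w) (hw : w ∈ sphere S r) (hle : z - w.x * y ≤ (k - 1) * x) :
      (wlen S (w⁻¹ * ⟨x, y, z⟩ * w) : ℤ) = wlen S ⟨x, y, z⟩ + 2 * w.y - 2 := by
    have := (abs_le.1 (abs_mul_le_of_mem_sphere hw hy.le)).2
    rw [wlen_conj_of_mem_strip (k := k - 1) hw hy] <;> linarith
  have a_mem : a ^ (r : ℤ) ∈ sphere S r := a_zpow_mem_sphere (by simp)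
  refine sphereCurv_pos_of_odd (f := fun w => 2 * w.y) inv_S (sphere_finite r)
    (by simp) (by lia) (fun w hw => ?_) ⟨_, a_mem, ?_⟩
  · have : (wlen S (w⁻¹ * ⟨x, y, z⟩ * w) : ℤ) ≤ wlen S ⟨x, y, z⟩ + 2 * w.y := by
      rcases lt_or_ge ((k - 1) * x) (z - w.x * y) with h | h
      · exact (wlen_conj_of_lt w hw h).le
      · linarith [wlen_conj_of_le w hw h]
    exact_mod_cast this
  · have := wlen_conj_of_le _ a_mem (by simp only [a_zpow]; linarith)
    exact_mod_cast this.trans_lt (sub_lt_self _ two_pos)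

lemma sphereCurv_neg_of_mem_strip (hr : 1 ≤ r) (hy : 0 < y) (hyk : y + r ≤ k) (hkx : k + r ≤ x)
    (hyx : (r + 1) * y ≤ x) (hz : k * x - y < z) (hzk : z ≤ k * x) :
    sphereCurv S r ⟨x, y, z⟩ < 0 := by
  have hr' : (1 : ℤ) ≤ r := mod_cast hr
  have y_le_ry : y ≤ r * y := le_mul_of_one_le_left hy.le hr'
  have wlen_eq : (wlen S ⟨x, y, z⟩ : ℤ) = 2 * k + x - y := by
    apply wlen_of_mem_strip <;> linarith
  have wlen_conj_of_le (w) (hw : w ∈ sphere S r) (hle : z - w.x * y ≤ k * x) :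
      (wlen S (w⁻¹ * ⟨x, y, z⟩ * w) : ℤ) = wlen S ⟨x, y, z⟩ + 2 * w.y := by
    have := (abs_le.1 (abs_mul_le_of_mem_sphere hw hy.le)).2
    rw [wlen_conj_of_mem_strip (k := k) hw hy] <;> linarith
  have wlen_conj_of_lt (w) (hw : w ∈ sphere S r) (hlt : k * x < z - w.x * y) :
      (wlen S (w⁻¹ * ⟨x, y, z⟩ * w) : ℤ) = wlen S ⟨x, y, z⟩ + 2 * w.y + 2 := by
    have := (abs_le.1 (abs_mul_le_of_mem_sphere hw hy.le)).1
    rw [wlen_conj_of_mem_strip (k := k + 1) hw hy] <;> linarith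
  have a_inv_mem : a ^ (-r : ℤ) ∈ sphere S r := a_zpow_mem_sphere (by simp)
  refine sphereCurv_neg_of_odd (f := fun w => 2 * w.y) inv_S (sphere_finite r)
    (by simp) (by lia) (fun w hw => ?_) ⟨_, a_inv_mem, ?_⟩
  · have : (wlen S ⟨x, y, z⟩ + 2 * w.y : ℤ) ≤ wlen S (w⁻¹ * ⟨x, y, z⟩ * w) := by
      rcases le_or_gt (z - w.x * y) (k * x) with h | h
      · exact (wlen_conj_of_le w hw h).ge
      · linarith [wlen_conj_of_lt w hw h]
    exact_mod_cast this
  · have := wlen_conj_of_lt _ a_inv_mem (by simp only [a_zpow]; linarith)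
    exact_mod_cast (lt_add_of_pos_right _ two_pos).trans_eq this.symm

end Curvature

section Density

/-- The elements `(x, y, k * x + l)` with `x`, `y`, `k`, `l` ranging over the integer intervals of
length `s` starting at `X`, `Y`, `K`, `L`. For `s ≤ X` the last coordinate determines `k` and `l`
once `x` is known. -/
def box (X Y K L : ℤ) (s : ℕ) : Set Heis :=
  (fun p : ℤ × ℤ × ℤ × ℤ => (⟨p.1, p.2.1, p.2.2.1 * p.1 + p.2.2.2⟩ : Heis)) ''
    (Set.Ico X (X + s) ×ˢ Set.Ico Y (Y + s) ×ˢ Set.Ico K (K + s) ×ˢ Set.Ico L (L + s))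

lemma eq_and_eq_of_mul_add_eq {s x k l k' l' L : ℤ} (hsx : s ≤ x) (hl : l ∈ Set.Ico L (L + s))
    (hl' : l' ∈ Set.Ico L (L + s)) (h : k * x + l = k' * x + l') : k = k' ∧ l = l' := by
  obtain ⟨hl, hls⟩ := hl
  obtain ⟨hl', hls'⟩ := hl'
  have dvd_sub : x ∣ l - l' := ⟨k' - k, by linarith⟩
  have abs_sub_lt : |l - l'| < x := abs_lt.2 ⟨by linarith, by linarith⟩
  have l_eq : l = l' := sub_eq_zero.1 (Int.eq_zero_of_abs_lt_dvd dvd_sub abs_sub_lt)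
  refine ⟨mul_right_cancel₀ (b := x) (by linarith) (by linarith), l_eq⟩

lemma ncard_box {X : ℤ} (Y K L : ℤ) {s : ℕ} (hs : s ≤ X) : (box X Y K L s).ncard = s ^ 4 := by
  have card_Ico (m : ℤ) : (Set.Ico m (m + s)).ncard = s := by
    rw [← Finset.coe_Ico, Set.ncard_coe_finset, Int.card_Ico]
    lia
  rw [box, Set.InjOn.ncard_image]
  · simp only [Set.ncard_prod, card_Ico]
    ring
  · rintro ⟨x, y, k, l⟩ ⟨hx, -, -, hl⟩ ⟨x', y', k', l'⟩ ⟨-, -, -, hl'⟩ heq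
    obtain ⟨rfl, rfl, hz⟩ := Heis.mk.inj heq
    obtain ⟨rfl, rfl⟩ := eq_and_eq_of_mul_add_eq (hs.trans hx.1) hl hl' hz
    rfl

lemma exists_mul_le_and_card_ball_le {D s₀ n : ℕ} (hD : 0 < D) (hs₀ : 0 < s₀) (hn : D * s₀ ≤ n) :
    ∃ s, s₀ ≤ s ∧ D * s ≤ n ∧ Nat.card (ball S n) ≤ 27 * (2 * D) ^ 4 * s ^ 4 := by
  have s₀_le : s₀ ≤ n / D := (Nat.le_div_iff_mul_le hD).2 (by linarith)
  have n_le : n ≤ 2 * D * (n / D) := by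
    nlinarith [Nat.lt_mul_div_succ n hD]
  refine ⟨n / D, s₀_le, Nat.mul_div_le n D, (card_ball_le (by nlinarith)).trans ?_⟩
  rw [mul_assoc, ← mul_pow]
  gcongr

lemma hasPositiveDensity_of_box_subset {P : Heis → Prop} {D s₀ : ℕ} (hD : 0 < D) (hs₀ : 0 < s₀)
    (h : ∀ s : ℕ, s₀ ≤ s → ∃ X Y K L : ℤ, s ≤ X ∧ box X Y K L s ⊆ {g ∈ ball S (D * s) | P g}) :
    HasPositiveDensity S P := by
  refine ⟨1 / (27 * (2 * D) ^ 4), by positivity, ?_⟩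
  filter_upwards [Filter.eventually_ge_atTop (D * s₀)] with n hn
  obtain ⟨s, hs, hsn, card_ball⟩ := exists_mul_le_and_card_ball_le hD hs₀ hn
  obtain ⟨X, Y, K, L, hX, hbox⟩ := h s hs
  have s_pow_le : s ^ 4 ≤ Nat.card {g ∈ ball S n | P g} := by
    rw [← ncard_box Y K L hX, Nat.card_coe_set_eq]
    exact Set.ncard_le_ncard (fun g hg => ⟨(hbox hg).1.trans hsn, (hbox hg).2⟩)
      ((ball_finite n).subset (Set.sep_subset _ _))
  rw [one_div_mul_eq_div, div_le_iff₀' (by positivity)]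
  exact_mod_cast card_ball.trans (Nat.mul_le_mul_left _ s_pow_le)

lemma mem_ball_of_wlen_eq {g : Heis} {n : ℕ} {m : ℤ} (h : (wlen S g : ℤ) = m) (hm : m ≤ n) :
    g ∈ ball S n :=
  Nat.cast_le.1 (h.trans_le hm)

lemma hasPositiveDensity_sphereCurv_eq_zero (r : ℕ) :
    HasPositiveDensity S fun g => sphereCurv S r g = 0 := by
  refine hasPositiveDensity_of_box_subset (D := 24 * (r + 1)) (s₀ := r + 2) (by positivity)
    (by positivity) fun s hs => ?_
  have hs' : (r + 2 : ℤ) ≤ s := mod_cast hs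
  have s_le : (8 * s : ℤ) ≤ 8 * (r + 1) * s := by gcongr; linarith
  refine ⟨8 * (r + 1) * s, 8 * (r + 1) * s, 2 * r + 1, 0, by linarith, ?_⟩
  rintro _ ⟨⟨x, y, k, l⟩, ⟨⟨hx, hxs⟩, ⟨hy, hys⟩, ⟨hk, hks⟩, ⟨hl, hls⟩⟩, rfl⟩
  dsimp only at *
  have x_pos : 0 < x := by linarith
  have max_le_two_mul : max x y ≤ 2 * x := max_le (by linarith) (by linarith)
  have r_mul_max_le : r * max x y ≤ r * (2 * x) := by gcongr
  have r_mul_max_nonneg : 0 ≤ r * max x y :=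
    mul_nonneg r.cast_nonneg (x_pos.le.trans (le_max_left x y))
  have lt_z : r * max x y < k * x + l := by
    have : (2 * r + 1) * x ≤ k * x := by gcongr
    linarith
  have z_le : k * x + l + r * max x y ≤ x * y := by
    have : (k + 1 + 2 * r) * x ≤ y * x := by gcongr; linarith
    linarith
  refine ⟨mem_ball_of_wlen_eq (wlen_of_le_mul x_pos (by linarith) (by linarith)) ?_,
    sphereCurv_eq_zero_of_le_mul x_pos lt_z z_le⟩
  push_cast
  linarith

lemma hasPositiveDensity_sphereCurv_pos {r : ℕ} (hr : 1 ≤ r) :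
    HasPositiveDensity S fun g => 0 < sphereCurv S r g := by
  refine hasPositiveDensity_of_box_subset (D := 24 * (r + 1)) (s₀ := r + 2) (by positivity)
    (by positivity) fun s hs => ?_
  have hs' : (r + 2 : ℤ) ≤ s := mod_cast hs
  have s_le : (8 * s : ℤ) ≤ 8 * (r + 1) * s := by gcongr; linarith
  refine ⟨8 * (r + 1) * s, s, 3 * s, 1, by linarith, ?_⟩
  rintro _ ⟨⟨x, y, k, l⟩, ⟨⟨hx, hxs⟩, ⟨hy, hys⟩, ⟨hk, hks⟩, ⟨hl, hls⟩⟩, rfl⟩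
  dsimp only at *
  have hyx : (r + 1) * y ≤ x := by
    have : (r + 1) * y ≤ (r + 1) * (8 * s) := by gcongr; linarith
    linarith
  refine ⟨mem_ball_of_wlen_eq (wlen_of_mem_strip (k := k + 1) ?_ ?_ ?_ ?_ ?_ ?_) ?_,
    sphereCurv_pos_of_mem_strip (k := k + 1) hr ?_ ?_ ?_ hyx ?_ ?_⟩
  all_goals push_cast; linarith

lemma hasPositiveDensity_sphereCurv_neg {r : ℕ} (hr : 1 ≤ r) :
    HasPositiveDensity S fun g => sphereCurv S r g < 0 := by
  refine hasPositiveDensity_of_box_subset (D := 24 * (r + 1)) (s₀ := r + 2) (by positivity)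
    (by positivity) fun s hs => ?_
  have hs' : (r + 2 : ℤ) ≤ s := mod_cast hs
  have s_le : (8 * s : ℤ) ≤ 8 * (r + 1) * s := by gcongr; linarith
  refine ⟨8 * (r + 1) * s, s, 3 * s, 1 - s, by linarith, ?_⟩
  rintro _ ⟨⟨x, y, k, l⟩, ⟨⟨hx, hxs⟩, ⟨hy, hys⟩, ⟨hk, hks⟩, ⟨hl, hls⟩⟩, rfl⟩
  dsimp only at *
  have hyx : (r + 1) * y ≤ x := by
    have : (r + 1) * y ≤ (r + 1) * (8 * s) := by gcongr; linarith
    linarith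
  refine ⟨mem_ball_of_wlen_eq (wlen_of_mem_strip (k := k) ?_ ?_ ?_ ?_ ?_ ?_) ?_,
    sphereCurv_neg_of_mem_strip (k := k) hr ?_ ?_ ?_ hyx ?_ ?_⟩
  all_goals push_cast; linarith

end Density

end Heis

/-- For every radius `r ≥ 1`, elements of positive, zero and negative
spherical comparison curvature of radius `r` each have positive density in the discrete
Heisenberg group `H(ℤ)`: there are `c > 0` and `N` such that for all `n ≥ N` each of the
three sets has cardinality at least `c·|B_n|`. -/
theorem heisenberg_three_signs_positive_density (r : ℕ) (hr : 1 ≤ r) :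
    ∃ c : ℝ, 0 < c ∧ ∃ N : ℕ, ∀ n : ℕ, N ≤ n →
      c * (Nat.card (MedScale.ball Heis.S n) : ℝ) ≤
        (Nat.card {g ∈ MedScale.ball Heis.S n | 0 < MedScale.sphereCurv Heis.S r g} : ℝ) ∧
      c * (Nat.card (MedScale.ball Heis.S n) : ℝ) ≤
        (Nat.card {g ∈ MedScale.ball Heis.S n | MedScale.sphereCurv Heis.S r g = 0} : ℝ) ∧
      c * (Nat.card (MedScale.ball Heis.S n) : ℝ) ≤
        (Nat.card {g ∈ MedScale.ball Heis.S n | MedScale.sphereCurv Heis.S r g < 0} : ℝ) := by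
  obtain ⟨c₁, hc₁, pos⟩ := Heis.hasPositiveDensity_sphereCurv_pos hr
  obtain ⟨c₂, hc₂, zero⟩ := Heis.hasPositiveDensity_sphereCurv_eq_zero r
  obtain ⟨c₃, hc₃, neg⟩ := Heis.hasPositiveDensity_sphereCurv_neg hr
  have min_mul_le {c : ℝ} (hc : min c₁ (min c₂ c₃) ≤ c) (n : ℕ) :
      min c₁ (min c₂ c₃) * (Nat.card (MedScale.ball Heis.S n) : ℝ) ≤
        c * (Nat.card (MedScale.ball Heis.S n) : ℝ) := by
    gcongr
  refine ⟨min c₁ (min c₂ c₃), by positivity, Filter.eventually_atTop.1 ?_⟩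
  filter_upwards [pos, zero, neg] with n pos zero neg
  exact ⟨(min_mul_le (by simp) n).trans pos, (min_mul_le (by simp) n).trans zero,
    (min_mul_le (by simp) n).trans neg⟩
end

section
/- Let F_n be the free group on n ≥ 1 generators with symmetric generating set S = {a₁^{±1}, …, a_n^{±1}} and word metric d. Then for all x ≠ y in F_n, GenCon(x, y) = (1/(2n))·Σ_{s∈S} |s⁻¹ x⁻¹ y s| = d(x, y) + 2 − 2/n. -/
/-- The standard symmetric generating set `S = {a₁^{±1}, …, a_n^{±1}}` of the free
group `F_n`. -/
def freeGen (n : ℕ) : Set (FreeGroup (Fin n)) :=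
  {g | ∃ i : Fin n, g = FreeGroup.of i ∨ g = (FreeGroup.of i)⁻¹}

/-!
For a letter `s` and a nontrivial reduced word `g`, passing from `g` to `s⁻¹ g` shortens the word
by one if `g` begins with `s` and lengthens it by one otherwise; likewise, multiplying by `s` on the
right shortens the word exactly when it ends with `s⁻¹`. The word `s⁻¹ g` ends with `s⁻¹` if and
only if `g` does (when `g = s`, neither does), so `|s⁻¹ g s| = |g| + 2`, minus `2` if `g` begins
with `s`, minus `2` if `g` ends with `s⁻¹`. Each of the two corrections occurs for exactly one
letter `s`.
-/

section

open FreeGroup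

variable {α : Type*}

/-- The formal inverse of a letter `a^{±1}`, the letter it cancels with in a word. As in
`FreeGroup`, `a` is encoded as `(a, true)` and `a⁻¹` as `(a, false)`. -/
def letterInv (l : α × Bool) : α × Bool :=
  (l.1, !l.2)

theorem letterInv_involutive : Function.Involutive (letterInv (α := α)) :=
  fun l => Prod.ext rfl (Bool.not_not l.2)

theorem mk_letterInv (l : α × Bool) : mk [letterInv l] = (mk [l])⁻¹ :=
  rfl

theorem range_mk_singleton :
    Set.range (fun l : α × Bool => mk [l]) = {g | ∃ i, g = of i ∨ g = (of i)⁻¹} := by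
  ext g
  simp only [Set.mem_range, Prod.exists, Bool.exists_bool, Set.mem_ofPred_eq]
  refine exists_congr fun i => ?_
  rw [or_comm, eq_comm, @eq_comm _ _ g]
  rfl

theorem mk_singleton_injective : Function.Injective (fun l : α × Bool => mk [l]) := by
  classical
  exact fun _ _ h => List.singleton_injective (reduce.sound h)

variable [DecidableEq α]

theorem toWord_mk_singleton_mul (l : α × Bool) (g : FreeGroup α) :
    (mk [l] * g).toWord =
      if g.toWord.head? = some (letterInv l) then g.toWord.tail else l :: g.toWord := by
  have reduce_cons : (mk [l] * g).toWord = reduce (l :: g.toWord) := by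
    rw [toWord_mul, toWord_mk, reduce_singleton, List.singleton_append]
  rw [reduce_cons, reduce.cons, reduce_toWord]
  rcases g.toWord with _ | ⟨p, w⟩
  · simp
  · have cancel_iff : (l.1 = p.1 ∧ l.2 = !p.2) ↔ p = letterInv l := by grind [letterInv]
    simp [cancel_iff]

theorem norm_mk_singleton_mul (l : α × Bool) (g : FreeGroup α) :
    (mk [l] * g).norm + (if g.toWord.head? = some (letterInv l) then 2 else 0) = g.norm + 1 := by
  simp only [FreeGroup.norm, toWord_mk_singleton_mul]
  rcases g.toWord with _ | ⟨p, w⟩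
  · simp
  · split_ifs <;> simp

theorem head?_toWord_inv (g : FreeGroup α) :
    g⁻¹.toWord.head? = g.toWord.getLast?.map letterInv := by
  rw [toWord_inv, invRev, List.head?_reverse, List.getLast?_map]
  rfl

theorem norm_mul_mk_singleton (g : FreeGroup α) (l : α × Bool) :
    (g * mk [l]).norm + (if g.toWord.getLast? = some (letterInv l) then 2 else 0) =
      g.norm + 1 := by
  have inv_eq : mk [letterInv l] * g⁻¹ = (g * mk [l])⁻¹ := by
    rw [mk_letterInv, mul_inv_rev]
  have h := norm_mk_singleton_mul (letterInv l) g⁻¹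
  simpa only [inv_eq, norm_inv_eq, head?_toWord_inv,
    (Option.map_injective letterInv_involutive.injective).eq_iff' (Option.map_some ..)] using h

theorem getLast?_toWord_mk_singleton_mul_eq_some_iff (l : α × Bool) {g : FreeGroup α}
    (hg : g ≠ 1) :
    (mk [l] * g).toWord.getLast? = some l ↔ g.toWord.getLast? = some l := by
  have hw : g.toWord ≠ [] := toWord_eq_nil_iff.not.mpr hg
  rw [toWord_mk_singleton_mul]
  generalize g.toWord = w at hw
  rcases w with _ | ⟨p, _ | ⟨q, w⟩⟩
  · contradiction
  · have letterInv_ne : letterInv l ≠ l := fun h => Bool.not_ne_self l.2 (congrArg Prod.snd h)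
    split_ifs with h <;> simp_all
  · split_ifs <;> simp

theorem norm_conj_mk_singleton (l : α × Bool) {g : FreeGroup α} (hg : g ≠ 1) :
    ((mk [l])⁻¹ * g * mk [l]).norm + (if g.toWord.head? = some l then 2 else 0) +
      (if g.toWord.getLast? = some (letterInv l) then 2 else 0) = g.norm + 2 := by
  have left := norm_mk_singleton_mul (letterInv l) g
  have right := norm_mul_mk_singleton (mk [letterInv l] * g) l
  rw [letterInv_involutive l] at left
  simp only [getLast?_toWord_mk_singleton_mul_eq_some_iff _ hg] at right
  rw [← mk_letterInv]
  lia

theorem sum_norm_conj_mk_singleton [Fintype α] {g : FreeGroup α} (hg : g ≠ 1) :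
    ∑ l : α × Bool, ((mk [l])⁻¹ * g * mk [l]).norm + 4 =
      2 * Fintype.card α * (g.norm + 2) := by
  have hw : g.toWord ≠ [] := toWord_eq_nil_iff.not.mpr hg
  have sum_head : ∑ l, (if g.toWord.head? = some l then 2 else 0) = 2 := by
    simp [List.head?_eq_some_head hw]
  have sum_getLast : ∑ l, (if g.toWord.getLast? = some (letterInv l) then 2 else 0) = 2 := by
    rw [letterInv_involutive.bijective.sum_comp
      (fun l => if g.toWord.getLast? = some l then 2 else 0)]
    simp [List.getLast?_eq_some_getLast hw]
  calc ∑ l : α × Bool, ((mk [l])⁻¹ * g * mk [l]).norm + 4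
      = ∑ l : α × Bool, (((mk [l])⁻¹ * g * mk [l]).norm +
          (if g.toWord.head? = some l then 2 else 0) +
          (if g.toWord.getLast? = some (letterInv l) then 2 else 0)) := by
        rw [Finset.sum_add_distrib, Finset.sum_add_distrib, sum_head, sum_getLast]
    _ = ∑ _l : α × Bool, (g.norm + 2) :=
        Finset.sum_congr rfl fun l _ => norm_conj_mk_singleton l hg
    _ = 2 * Fintype.card α * (g.norm + 2) := by
        simp [mul_comm]

theorem freeGroup_genCon_general [Fintype α] (x y : FreeGroup α) (hxy : x ≠ y) :
    (1 / (2 * Fintype.card α : ℝ)) *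
        ∑ᶠ s ∈ {g : FreeGroup α | ∃ i, g = of i ∨ g = (of i)⁻¹},
          ((s⁻¹ * (x⁻¹ * y) * s).norm : ℝ) =
      ((x⁻¹ * y).norm : ℝ) + 2 - 2 / (Fintype.card α : ℝ) := by
  have hg : x⁻¹ * y ≠ 1 := inv_mul_eq_one.not.mpr hxy
  have : Nonempty α := by
    by_contra! h
    exact hxy (Subsingleton.elim x y)
  have card_ne_zero : (Fintype.card α : ℝ) ≠ 0 := Nat.cast_ne_zero.mpr Fintype.card_ne_zero
  rw [← range_mk_singleton, finsum_mem_range mk_singleton_injective, finsum_eq_sum_of_fintype]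
  have sum_norm := congrArg (Nat.cast (R := ℝ)) (sum_norm_conj_mk_singleton hg)
  push_cast at sum_norm
  rw [eq_sub_of_add_eq sum_norm]
  field_simp
  ring

end

/-- In the free group `F_n` (`n ≥ 1`) with generating set
`S = {a₁^{±1}, …, a_n^{±1}}` (of size `2n`) and reduced word length `|·|`, for all
`x ≠ y` one has `GenCon(x,y) = (1/(2n)) ∑_{s ∈ S} |s⁻¹ x⁻¹ y s| = d(x,y) + 2 − 2/n`. -/
theorem freeGroup_genCon (n : ℕ) (hn : 1 ≤ n) (x y : FreeGroup (Fin n)) (hxy : x ≠ y) :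
    (1 / (2 * n : ℝ)) * ∑ᶠ s ∈ freeGen n, (((s⁻¹ * (x⁻¹ * y) * s).norm : ℝ)) =
      ((x⁻¹ * y).norm : ℝ) + 2 - 2 / (n : ℝ) := by
  simpa only [Fintype.card_fin, freeGen] using freeGroup_genCon_general x y hxy
end
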